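/- arXiv:1111.6348 — 5 statements merged into one kernel-verified Lean document; each statement's English description precedes it below -/
import Mathlib

section
/- Let μ be a finite positive Borel measure with compact infinite support contained in the closed unit disk 𝔻̄ = {z : |z| ≤ 1}, and let 𝒩 ⊆ ℕ be an infinite set such that κ_n/κ_{n−1} → 1 as n → ∞ through 𝒩. Then z·p_{n−1}(z;μ)/p_n(z;μ) → 1 as n → ∞ through 𝒩, uniformly on every compact subset of {z ∈ ℂ : |z| > 1}. -/
/-!
Write `N f = ∫ |f|² dμ`. Since `μ` lives on the closed unit disk, `N (X f) ≤ N f`.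

* Put `c = κ (n-1) / κ n` and `q = X p_{n-1} - c p_n`. The leading terms cancel, so `deg q < n` and
  `q ⟂ p_n`; Pythagoras gives `N q = N (X p_{n-1}) - c² ≤ 1 - c²`, which tends to `0` along `𝒩`.
* For `|w| > 1` and any `q` with `deg q < n`, the value `lam = q(w) / p_n(w)` satisfies
  `|lam|² (|w|² - 1) ≤ N q` (`eval_bound`). Indeed `q - lam p_n = (X - w) r` with `deg r < n`, so
  Pythagoras applied to `X r = (w r + q) - lam p_n` gives `N (w r + q) + |lam|² = N (X r) ≤ N r`,
  while the pointwise inequality `(|w|² - 1)(|a|² - |w a + b|²) ≤ |b|²` bounds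
  `N r - N (w r + q)` by `N q / (|w|² - 1)`. The same argument with `q = 0`, `lam = 1` shows that
  `p_n(w) ≠ 0`.

Together, `|w p_{n-1}(w) / p_n(w) - c|² (|w|² - 1) ≤ 1 - c²`, and `|w|² - 1` is bounded below on a
compact subset of `{|w| > 1}`.
-/

open MeasureTheory Filter Topology Polynomial

noncomputable section

/-- The closed support of a measure: the set of points all of whose neighborhoods
have positive measure. -/
def measSupport {α : Type*} [TopologicalSpace α] [MeasurableSpace α] (μ : Measure α) : Set α :=
  {x | ∀ U ∈ nhds x, μ U ≠ 0}

/-- `p` is the sequence of orthonormal polynomials for `μ`, with positive real leading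
coefficients `κ`. -/
def OrthonormalPolys (μ : Measure ℂ) (p : ℕ → Polynomial ℂ) (κ : ℕ → ℝ) : Prop :=
  (∀ n, (p n).degree = n) ∧ (∀ n, 0 < κ n) ∧ (∀ n, (p n).leadingCoeff = (κ n : ℂ)) ∧
  (∀ n m, ∫ z, (starRingEnd ℂ) ((p n).eval z) * (p m).eval z ∂μ
      = if n = m then 1 else 0)

/-- The square of the `L²(μ)` norm of a polynomial. -/
def sqNorm (μ : Measure ℂ) (f : ℂ[X]) : ℝ := ∫ z, ‖f.eval z‖ ^ 2 ∂μ

/-- The complement of the closed support is null, as `ℂ` is second countable. -/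
lemma ae_norm_le_one (μ : Measure ℂ) (hD : measSupport μ ⊆ Metric.closedBall (0 : ℂ) 1) :
    ∀ᵐ z ∂μ, ‖z‖ ≤ 1 := by
  rw [ae_iff]
  refine measure_null_of_locally_null _ fun x hx => ?_
  have hx' : x ∉ measSupport μ := fun h => hx (by simpa using hD h)
  simp only [measSupport, Set.mem_ofPred_eq, not_forall, not_not] at hx'
  obtain ⟨U, hU, h0⟩ := hx'
  exact ⟨U, mem_nhdsWithin_of_mem_nhds hU, h0⟩

/-- A continuous function is integrable, because it is bounded on the closed unit disk. -/
lemma integrable_of_cont {E : Type*} [NormedAddCommGroup E] [SecondCountableTopology E]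
    (μ : Measure ℂ) [IsFiniteMeasure μ]
    (h1 : ∀ᵐ z ∂μ, ‖z‖ ≤ 1) (f : ℂ → E) (hf : Continuous f) : Integrable f μ := by
  obtain ⟨C, hC⟩ := (isCompact_closedBall (0 : ℂ) 1).exists_bound_of_continuousOn hf.continuousOn
  refine Integrable.of_bound hf.aestronglyMeasurable C ?_
  filter_upwards [h1] with z hz
  exact hC z (by simpa using hz)

lemma continuous_conj_mul (f g : ℂ[X]) :
    Continuous fun z => (starRingEnd ℂ) (f.eval z) * g.eval z :=
  (Complex.continuous_conj.comp f.continuous).mul g.continuous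

lemma sqNorm_X_mul_le (μ : Measure ℂ) [IsFiniteMeasure μ] (h1 : ∀ᵐ z ∂μ, ‖z‖ ≤ 1) (f : ℂ[X]) :
    sqNorm μ (X * f) ≤ sqNorm μ f := by
  refine integral_mono_ae (integrable_of_cont μ h1 _ (by fun_prop))
    (integrable_of_cont μ h1 _ (by fun_prop)) ?_
  filter_upwards [h1] with z hz
  simp only [eval_mul, eval_X, norm_mul]
  gcongr
  exact mul_le_of_le_one_left (norm_nonneg _) hz

/-- The pointwise inequality behind `eval_bound`: it reduces to `0 ≤ (|a| - |w| |w a + b|)²`. -/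
lemma pointwise_bound (w a b : ℂ) :
    (‖w‖ ^ 2 - 1) * (‖a‖ ^ 2 - ‖w * a + b‖ ^ 2) ≤ ‖b‖ ^ 2 := by
  have h : (‖w * a + b‖ - ‖w‖ * ‖a‖) ^ 2 ≤ ‖b‖ ^ 2 := by
    have := abs_norm_sub_norm_le (w * a + b) (w * a)
    rw [add_sub_cancel_left, norm_mul] at this
    rw [← sq_abs]
    gcongr
  nlinarith [sq_nonneg (‖a‖ - ‖w‖ * ‖w * a + b‖)]

lemma sqNorm_bound (μ : Measure ℂ) [IsFiniteMeasure μ] (h1 : ∀ᵐ z ∂μ, ‖z‖ ≤ 1) (w : ℂ)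
    (r q : ℂ[X]) :
    (‖w‖ ^ 2 - 1) * (sqNorm μ r - sqNorm μ (C w * r + q)) ≤ sqNorm μ q := by
  unfold sqNorm
  rw [← integral_sub (integrable_of_cont μ h1 _ (by fun_prop))
    (integrable_of_cont μ h1 _ (by fun_prop)), ← integral_const_mul]
  refine integral_mono (integrable_of_cont μ h1 _ (by fun_prop))
    (integrable_of_cont μ h1 _ (by fun_prop)) fun z => ?_
  simpa using pointwise_bound w (r.eval z) (q.eval z)

/-- Subtracting the right multiple of a polynomial of degree `m` lowers the degree. -/
lemma degree_sub_lt_of {m : ℕ} {f g : ℂ[X]} (c : ℂ) (hf : f.degree < (m + 1 : ℕ))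
    (hg : g.degree < (m + 1 : ℕ)) (hc : f.coeff m = c * g.coeff m) :
    (f - C c * g).degree < m := by
  rw [degree_lt_iff_coeff_zero] at hf hg ⊢
  intro k hk
  rcases hk.eq_or_lt with rfl | hk
  · simp [hc]
  · simp [hf k hk, hg k hk]

section
variable {μ : Measure ℂ} {p : ℕ → ℂ[X]} {κ : ℕ → ℝ}

lemma coeff_self (hON : OrthonormalPolys μ p κ) (n : ℕ) : (p n).coeff n = κ n := by
  rw [← hON.2.2.1 n, leadingCoeff, natDegree_eq_of_degree_eq_some (hON.1 n)]

lemma degree_lt_succ (hON : OrthonormalPolys μ p κ) (n : ℕ) :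
    (p n).degree < (n + 1 : ℕ) := by
  rw [hON.1 n]; exact_mod_cast n.lt_succ_self

lemma sqNorm_self (hON : OrthonormalPolys μ p κ) (n : ℕ) : sqNorm μ (p n) = 1 := by
  have h := hON.2.2.2 n n
  rw [if_pos rfl] at h
  have e : ∀ z, (starRingEnd ℂ) ((p n).eval z) * (p n).eval z
      = ((‖(p n).eval z‖ ^ 2 : ℝ) : ℂ) := fun z => by
    rw [Complex.conj_mul']; push_cast; rfl
  simp_rw [e] at h
  rw [integral_complex_ofReal] at h
  exact_mod_cast h

variable [IsFiniteMeasure μ]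

/-- `p n` is orthogonal to all polynomials of degree less than `n`; the induction on the bound `m`
for the degree peels off multiples of `p m`. -/
lemma inner_eq_zero (h1 : ∀ᵐ z ∂μ, ‖z‖ ≤ 1) (hON : OrthonormalPolys μ p κ) (n : ℕ) :
    ∀ m ≤ n, ∀ g : ℂ[X], g.degree < m →
      ∫ z, (starRingEnd ℂ) ((p n).eval z) * g.eval z ∂μ = 0 := by
  intro m
  induction m with
  | zero =>
    intro _ g hg
    have : g = 0 := by
      rw [← degree_eq_bot]
      exact Nat.WithBot.lt_zero_iff.1 (by simpa using hg)
    simp [this]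
  | succ m ih =>
    intro hm g hg
    set c : ℂ := g.coeff m / κ m with hc
    have hκ : (κ m : ℂ) ≠ 0 := by exact_mod_cast (hON.2.1 m).ne'
    have hd := degree_sub_lt_of c hg (degree_lt_succ hON m)
      (by rw [coeff_self hON, hc, div_mul_cancel₀ _ hκ])
    have h0 := ih (by omega) _ hd
    have horth := hON.2.2.2 n m
    rw [if_neg (by omega)] at horth
    have e : ∀ z, (starRingEnd ℂ) ((p n).eval z) * g.eval z
        = (starRingEnd ℂ) ((p n).eval z) * (g - C c * p m).eval z
          + c * ((starRingEnd ℂ) ((p n).eval z) * (p m).eval z) := by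
      intro z; simp only [eval_sub, eval_mul, eval_C]; ring
    simp_rw [e]
    rw [integral_add (integrable_of_cont μ h1 _ (continuous_conj_mul _ _))
      ((integrable_of_cont μ h1 _ (continuous_conj_mul _ _)).const_mul c),
      integral_const_mul, h0, horth]
    simp

/-- Pythagoras for `g ⟂ p n`. -/
lemma sqNorm_add (h1 : ∀ᵐ z ∂μ, ‖z‖ ≤ 1) (hON : OrthonormalPolys μ p κ) (n : ℕ) (g : ℂ[X])
    (hg : g.degree < n) (c : ℂ) :
    sqNorm μ (g + C c * p n) = sqNorm μ g + ‖c‖ ^ 2 := by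
  have h0 := inner_eq_zero h1 hON n n le_rfl g hg
  have hcont := continuous_conj_mul (p n) g
  have hcross : ∫ z, ((starRingEnd ℂ) c * ((starRingEnd ℂ) ((p n).eval z) * g.eval z)).re ∂μ
      = 0 := by
    have := integral_re (𝕜 := ℂ)
      ((integrable_of_cont μ h1 _ hcont).const_mul ((starRingEnd ℂ) c))
    simp only [RCLike.re_to_complex] at this
    rw [this, integral_const_mul, h0]
    simp
  have e : ∀ z, ‖(g + C c * p n).eval z‖ ^ 2 = ‖g.eval z‖ ^ 2 + (‖c‖ ^ 2 * ‖(p n).eval z‖ ^ 2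
      + 2 * ((starRingEnd ℂ) c * ((starRingEnd ℂ) ((p n).eval z) * g.eval z)).re) := by
    intro z
    simp only [eval_add, eval_mul, eval_C, ← Complex.normSq_eq_norm_sq, Complex.normSq_apply,
      Complex.add_re, Complex.add_im, Complex.mul_re, Complex.mul_im, Complex.conj_re,
      Complex.conj_im]
    ring
  have hs := sqNorm_self hON n
  unfold sqNorm at hs ⊢
  simp_rw [e]
  have hint : Integrable
      (fun z => ((starRingEnd ℂ) c * ((starRingEnd ℂ) ((p n).eval z) * g.eval z)).re) μ :=
    integrable_of_cont μ h1 _ (Complex.continuous_re.comp (continuous_const.mul hcont))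
  have hsum : Integrable (fun z => ‖c‖ ^ 2 * ‖(p n).eval z‖ ^ 2
      + 2 * ((starRingEnd ℂ) c * ((starRingEnd ℂ) ((p n).eval z) * g.eval z)).re) μ :=
    (integrable_of_cont μ h1 _ (by fun_prop)).add (hint.const_mul 2)
  rw [integral_add (integrable_of_cont μ h1 _ (by fun_prop)) hsum,
    integral_add (integrable_of_cont μ h1 _ (by fun_prop)) (hint.const_mul 2),
    integral_const_mul, integral_const_mul, hcross, hs]
  ring

/-- If `q - lam p_n` vanishes at `w` and `deg q < n`, then `|lam|² (|w|² - 1) ≤ sqNorm μ q`. -/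
lemma eval_bound (h1 : ∀ᵐ z ∂μ, ‖z‖ ≤ 1) (hON : OrthonormalPolys μ p κ) (n : ℕ) (q : ℂ[X])
    (hq : q.degree < n) (lam w : ℂ) (hw : 1 < ‖w‖) (h : q.eval w = lam * (p n).eval w) :
    ‖lam‖ ^ 2 * (‖w‖ ^ 2 - 1) ≤ sqNorm μ q := by
  obtain ⟨r, hr⟩ : X - C w ∣ q - C lam * p n := by
    rw [dvd_iff_isRoot]; simp [h]
  have hr_deg : r.degree < n := by
    have h2 : (q - C lam * p n).degree < (n + 1 : ℕ) := by
      rw [degree_lt_iff_coeff_zero]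
      intro k hk
      have h3 := (degree_lt_iff_coeff_zero _ _).1 hq k (by omega)
      have h4 := (degree_lt_iff_coeff_zero _ _).1 (degree_lt_succ hON n) k hk
      simp [h3, h4]
    rcases eq_or_ne r 0 with rfl | hr0
    · simp
    · rw [hr, degree_mul, degree_X_sub_C, degree_eq_natDegree hr0] at h2
      rw [degree_eq_natDegree hr0]
      norm_cast at h2 ⊢
      omega
  have hdeg : (C w * r + q).degree < n := by
    rw [degree_lt_iff_coeff_zero] at hr_deg hq ⊢
    intro k hk
    simp [hr_deg k hk, hq k hk]
  have e : X * r = (C w * r + q) + C (-lam) * p n := by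
    rw [C_neg]; linear_combination -hr
  have h5 := sqNorm_add h1 hON n _ hdeg (-lam)
  rw [← e, norm_neg] at h5
  have h6 := sqNorm_X_mul_le μ h1 r
  have h7 := sqNorm_bound μ h1 w r q
  have h8 : 0 < ‖w‖ ^ 2 - 1 := by nlinarith
  nlinarith

lemma eval_ne_zero (h1 : ∀ᵐ z ∂μ, ‖z‖ ≤ 1) (hON : OrthonormalPolys μ p κ) (n : ℕ) (w : ℂ)
    (hw : 1 < ‖w‖) : (p n).eval w ≠ 0 := by
  intro h
  have := eval_bound h1 hON n 0 (by simp) 1 w hw (by simp [h])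
  simp only [sqNorm, eval_zero, norm_zero, norm_one] at this
  norm_num at this
  nlinarith

/-- The quantitative estimate: `eval_bound` applied to `q = X p_n - c p_{n+1}` with
`c = κ n / κ (n + 1)`, for which `lam = w p_n(w) / p_{n+1}(w) - c`. -/
lemma ratio_bound (h1 : ∀ᵐ z ∂μ, ‖z‖ ≤ 1) (hON : OrthonormalPolys μ p κ) (n : ℕ) (w : ℂ)
    (hw : 1 < ‖w‖) :
    ‖w * (p n).eval w / (p (n + 1)).eval w - (κ n / κ (n + 1) : ℝ)‖ ^ 2 * (‖w‖ ^ 2 - 1)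
      ≤ 1 - (κ n / κ (n + 1)) ^ 2 := by
  set c : ℝ := κ n / κ (n + 1) with hc
  have hκ : (κ (n + 1) : ℂ) ≠ 0 := by exact_mod_cast (hON.2.1 (n + 1)).ne'
  set q : ℂ[X] := X * p n - C (c : ℂ) * p (n + 1) with hq
  have hXp : (X * p n).degree < ((n + 1 + 1 : ℕ) : WithBot ℕ) := by
    rw [degree_mul, degree_X, hON.1 n]
    norm_cast
    omega
  have hdeg : q.degree < (n + 1 : ℕ) := by
    refine degree_sub_lt_of _ hXp (degree_lt_succ hON _) ?_
    rw [coeff_X_mul, coeff_self hON, coeff_self hON, hc]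
    push_cast
    rw [div_mul_cancel₀ _ hκ]
  have hpy := sqNorm_add h1 hON (n + 1) q hdeg c
  rw [hq, sub_add_cancel, ← hq, Complex.norm_real, Real.norm_eq_abs, sq_abs] at hpy
  have hX := sqNorm_X_mul_le μ h1 (p n)
  rw [sqNorm_self hON] at hX
  have hne := eval_ne_zero h1 hON (n + 1) w hw
  have := eval_bound h1 hON (n + 1) q hdeg
    (w * (p n).eval w / (p (n + 1)).eval w - (c : ℂ)) w hw (by
      simp only [hq, eval_sub, eval_mul, eval_X, eval_C]
      field_simp)
  linarith

end

theorem disk_ratio_asymptotics_from_kappa_ratio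
    (μ : Measure ℂ) [IsFiniteMeasure μ]
    (hc : IsCompact (measSupport μ)) (hi : (measSupport μ).Infinite)
    (hD : measSupport μ ⊆ Metric.closedBall (0 : ℂ) 1)
    (p : ℕ → Polynomial ℂ) (κ : ℕ → ℝ) (hON : OrthonormalPolys μ p κ)
    (𝒩 : Set ℕ) (h𝒩 : 𝒩.Infinite)
    (hκ : Tendsto (fun n => κ n / κ (n - 1)) (atTop ⊓ 𝓟 𝒩) (𝓝 1)) :
    ∀ K : Set ℂ, IsCompact K → K ⊆ {z : ℂ | 1 < ‖z‖} →
      TendstoUniformlyOn (fun n z => z * (p (n - 1)).eval z / (p n).eval z)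
        (fun _ => (1 : ℂ)) (atTop ⊓ 𝓟 𝒩) K := by
  intro K hK hKs
  have h1 := ae_norm_le_one μ hD
  obtain ⟨δ, hδ, hδK⟩ : ∃ δ > 0, ∀ z ∈ K, δ ≤ ‖z‖ ^ 2 - 1 := by
    rcases K.eq_empty_or_nonempty with rfl | hne
    · exact ⟨1, one_pos, by simp⟩
    · obtain ⟨x, hx, hmin⟩ := hK.exists_isMinOn hne
        (f := fun z : ℂ => ‖z‖ ^ 2 - 1) (by fun_prop)
      have hx1 : 1 < ‖x‖ := hKs hx
      exact ⟨‖x‖ ^ 2 - 1, by nlinarith, fun z hz => hmin hz⟩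
  have hcl : Tendsto (fun n => κ (n - 1) / κ n) (atTop ⊓ 𝓟 𝒩) (𝓝 1) := by
    simpa using hκ.inv₀ one_ne_zero
  rw [Metric.tendstoUniformlyOn_iff]
  intro ε hε
  have hsq : ∀ᶠ n in atTop ⊓ 𝓟 𝒩, 1 - (κ (n - 1) / κ n) ^ 2 < δ * (ε / 2) ^ 2 := by
    have : Tendsto (fun n => 1 - (κ (n - 1) / κ n) ^ 2) (atTop ⊓ 𝓟 𝒩) (𝓝 0) := by
      simpa using (hcl.pow 2).const_sub 1
    exact this.eventually_lt_const (by positivity)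
  have hge : ∀ᶠ n : ℕ in atTop ⊓ 𝓟 𝒩, 1 ≤ n := (eventually_ge_atTop 1).filter_mono inf_le_left
  filter_upwards [hsq, hge, Metric.tendsto_nhds.1 hcl (ε / 2) (half_pos hε)] with n hn hn1 hnc z hz
  obtain ⟨m, rfl⟩ := Nat.exists_eq_add_of_le' hn1
  simp only [Nat.add_sub_cancel] at *
  have hb := ratio_bound h1 hON m z (hKs hz)
  set c : ℝ := κ m / κ (m + 1)
  set F : ℂ := z * (p m).eval z / (p (m + 1)).eval z
  have hF : ‖F - c‖ < ε / 2 := by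
    have h2 : ‖F - c‖ ^ 2 * δ ≤ ‖F - c‖ ^ 2 * (‖z‖ ^ 2 - 1) :=
      mul_le_mul_of_nonneg_left (hδK z hz) (by positivity)
    have h3 : ‖F - c‖ ^ 2 < (ε / 2) ^ 2 := by
      refine lt_of_mul_lt_mul_left (a := δ) ?_ hδ.le
      linarith
    exact lt_of_pow_lt_pow_left₀ 2 (by positivity) h3
  have hc1 : ‖(c : ℂ) - 1‖ < ε / 2 := by
    rw [← Complex.ofReal_one, ← Complex.ofReal_sub, Complex.norm_real, ← dist_eq_norm]
    exact hnc
  rw [dist_comm, dist_eq_norm]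
  calc ‖F - 1‖ = ‖(F - c) + (c - 1)‖ := by ring_nf
    _ ≤ ‖F - c‖ + ‖(c : ℂ) - 1‖ := norm_add_le _ _
    _ < ε := by linarith
end
end

section
/- Let μ be a finite positive Borel measure that is regular on the closed unit disk 𝔻̄, i.e. supp(μ) ⊆ 𝔻̄, the unit circle ∂𝔻 is contained in supp(μ), and κ_n^{1/n} → 1 as n → ∞. Then there exists a set 𝒩 ⊆ ℕ of asymptotic density 1 such that z·p_{n−1}(z;μ)/p_n(z;μ) → 1 as n → ∞ through 𝒩, uniformly on every compact subset of {z ∈ ℂ : |z| > 1}. -/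
/-!
The measure enters only through the Hilbert space structure it puts on polynomials: the map
`φ : ℂ[X] → L²(μ)` satisfies `‖φ (X f)‖ ≤ ‖φ f‖`, because `μ` lives on the closed unit disk.

Write `r = κ n / κ (n + 1)`. This is the inner product of `φ (p (n + 1))` with `φ (X p n)`, so
`r ≤ 1`, and `e = X p n - r p (n + 1)` has degree at most `n` and `‖φ e‖² ≤ 1 - r²`
(`exists_remainder`).

For `1 < ‖z‖`, a polynomial `q` of degree at most `n` satisfies
`(‖z‖ - 1) |q z| ≤ r |p (n + 1) z| ‖φ q‖` (`eval_bound`). Indeed let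
`(X - z) h = q(z) p (n + 1) - p (n + 1)(z) q`; since multiplication by `X` compressed to polynomials
of degree at most `n` is a contraction, `(‖z‖ - 1) ‖φ h‖ ≤ |p (n + 1) z| ‖φ q‖`, while the leading
coefficient `q(z) κ (n + 1)` of `h` is at most `κ n ‖φ h‖` in modulus. With `q = 1` this shows
`p (n + 1) z ≠ 0`, and with `q = e` it gives
`|z p n z / p (n + 1) z - 1| ≤ (1 - r) + √(1 - r²) / (‖z‖ - 1)` (`ratio_bound`).

Finally `log κ (n + 1) - log κ n ≥ 0` has Cesàro means tending to `0` by regularity, so it tends to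
`0` along a set of density one (`exists_density_one`); there `r → 1`.
-/

open MeasureTheory Filter Topology Polynomial

noncomputable section

/-- A set of natural numbers has asymptotic density one. -/
def hasDensityOne (S : Set ℕ) : Prop :=
  Filter.Tendsto (fun n : ℕ => (Nat.card ↥(S ∩ Set.Icc 1 n) : ℝ) / n) Filter.atTop (nhds 1)

/-! ### Orthonormal polynomials for a Hilbert norm contracted by multiplication by `X` -/

section Abstract

variable {E : Type*} [NormedAddCommGroup E] [InnerProductSpace ℂ E]

local notation "⟪" x ", " y "⟫" => inner ℂ x y

theorem mem_span_of_degree_lt {p : ℕ → ℂ[X]} {κ : ℕ → ℝ}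
    (hdeg : ∀ n, (p n).degree = n) (hκ : ∀ n, 0 < κ n)
    (hlc : ∀ n, (p n).leadingCoeff = (κ n : ℂ)) (n : ℕ) :
    ∀ f : ℂ[X], f.degree < n → f ∈ Submodule.span ℂ (p '' Set.Iio n) := by
  induction n with
  | zero =>
    intro f hf
    have : f = 0 := by
      rw [← degree_eq_bot]
      simpa using hf
    simp [this]
  | succ n ih =>
    intro f hf
    have hκn : (κ n : ℂ) ≠ 0 := by exact_mod_cast (hκ n).ne'
    have hpc : (p n).coeff n = κ n := by
      rw [← hlc n, leadingCoeff, natDegree_eq_of_degree_eq_some (hdeg n)]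
    have hg : (f - (f.coeff n / κ n) • p n).degree < n := by
      rw [degree_lt_iff_coeff_zero]
      intro m hm
      rcases hm.eq_or_lt with rfl | hm
      · simp [hpc, hκn]
      · have h1 : f.coeff m = 0 := (degree_lt_iff_coeff_zero _ _).1 hf m hm
        have h2 : (p n).coeff m = 0 :=
          coeff_eq_zero_of_degree_lt (by rw [hdeg]; exact_mod_cast hm)
        simp [h1, h2]
    have h1 := Submodule.span_mono (Set.image_mono (f := p) (Set.Iio_subset_Iio n.le_succ))
      (ih _ hg)
    have h2 : (f.coeff n / κ n) • p n ∈ Submodule.span ℂ (p '' Set.Iio (n + 1)) :=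
      Submodule.smul_mem _ _ (Submodule.subset_span ⟨n, by simp, rfl⟩)
    simpa using Submodule.add_mem _ h1 h2

variable {φ : ℂ[X] →ₗ[ℂ] E} {p : ℕ → ℂ[X]} {κ : ℕ → ℝ}

theorem inner_eq_zero_of_degree_lt
    (hdeg : ∀ n, (p n).degree = n) (hκ : ∀ n, 0 < κ n)
    (hlc : ∀ n, (p n).leadingCoeff = (κ n : ℂ))
    (hon : ∀ n m, ⟪φ (p n), φ (p m)⟫ = if n = m then 1 else 0)
    {n : ℕ} {f : ℂ[X]} (hf : f.degree < n) : ⟪φ (p n), φ f⟫ = 0 := by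
  have hs := mem_span_of_degree_lt hdeg hκ hlc n f hf
  clear hf
  induction hs using Submodule.span_induction with
  | mem x hx =>
    obtain ⟨m, hm, rfl⟩ := hx
    rw [hon, if_neg (ne_of_gt hm)]
  | zero => simp
  | add x y _ _ hx hy => rw [map_add, inner_add_right, hx, hy, add_zero]
  | smul a x _ hx => rw [map_smul, inner_smul_right, hx, mul_zero]

theorem inner_eq_coeff
    (hdeg : ∀ n, (p n).degree = n) (hκ : ∀ n, 0 < κ n)
    (hlc : ∀ n, (p n).leadingCoeff = (κ n : ℂ))
    (hon : ∀ n m, ⟪φ (p n), φ (p m)⟫ = if n = m then 1 else 0)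
    {n : ℕ} {f : ℂ[X]} (hf : f.degree < (n + 1 : ℕ)) :
    ⟪φ (p n), φ f⟫ = f.coeff n / κ n := by
  have hκn : (κ n : ℂ) ≠ 0 := by exact_mod_cast (hκ n).ne'
  have hpc : (p n).coeff n = κ n := by
    rw [← hlc n, leadingCoeff, natDegree_eq_of_degree_eq_some (hdeg n)]
  have hg : (f - (f.coeff n / κ n) • p n).degree < n := by
    rw [degree_lt_iff_coeff_zero]
    intro m hm
    rcases hm.eq_or_lt with rfl | hm
    · simp [hpc, hκn]
    · have h1 : f.coeff m = 0 := (degree_lt_iff_coeff_zero _ _).1 hf m hm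
      have h2 : (p n).coeff m = 0 :=
        coeff_eq_zero_of_degree_lt (by rw [hdeg]; exact_mod_cast hm)
      simp [h1, h2]
  have h := inner_eq_zero_of_degree_lt hdeg hκ hlc hon hg
  rw [map_sub, map_smul, inner_sub_right, inner_smul_right, hon, if_pos rfl, mul_one,
    sub_eq_zero] at h
  exact h

theorem norm_eq_one
    (hon : ∀ n m, ⟪φ (p n), φ (p m)⟫ = if n = m then 1 else 0) (n : ℕ) : ‖φ (p n)‖ = 1 := by
  have h := hon n n
  rw [if_pos rfl, inner_self_eq_norm_sq_to_K] at h
  have h2 : ‖φ (p n)‖ ^ 2 = 1 := by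
    have h3 : ((‖φ (p n)‖ ^ 2 : ℝ) : ℂ) = ((1 : ℝ) : ℂ) := by
      simpa using h
    exact Complex.ofReal_injective h3
  exact (pow_eq_one_iff_of_nonneg (norm_nonneg _) two_ne_zero).1 h2

theorem norm_sq_add_of_inner_zero {u v : E} (hu : ‖u‖ = 1) (h : ⟪u, v⟫ = 0) (c : ℂ) :
    ‖c • u + v‖ ^ 2 = ‖c‖ ^ 2 + ‖v‖ ^ 2 := by
  have := norm_add_sq_eq_norm_sq_add_norm_sq_of_inner_eq_zero (𝕜 := ℂ) (c • u) v
    (by rw [inner_smul_left, h, mul_zero])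
  rw [norm_smul, hu, mul_one] at this
  nlinarith

/-- The pointwise value of a polynomial `q` of degree at most `n` outside the unit disk is
controlled by its norm and by the orthonormal polynomial of degree `n + 1`. -/
theorem eval_bound_s7
    (hX : ∀ f, ‖φ (X * f)‖ ≤ ‖φ f‖)
    (hdeg : ∀ n, (p n).degree = n) (hκ : ∀ n, 0 < κ n)
    (hlc : ∀ n, (p n).leadingCoeff = (κ n : ℂ))
    (hon : ∀ n m, ⟪φ (p n), φ (p m)⟫ = if n = m then 1 else 0)
    {n : ℕ} {q : ℂ[X]} (hq : q.degree < (n + 1 : ℕ)) {z : ℂ} (hz : 1 < ‖z‖) :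
    (‖z‖ - 1) * ‖q.eval z‖ ≤ κ n / κ (n + 1) * (‖(p (n + 1)).eval z‖ * ‖φ q‖) := by
  obtain ⟨h, hh⟩ : (X - C z) ∣ (q.eval z • p (n + 1) - (p (n + 1)).eval z • q) := by
    rw [dvd_iff_isRoot]
    simp [mul_comm]
  have hhd : h.degree < (n + 1 : ℕ) := by
    have h1 : ((X - C z) * h).degree < ((n + 2 : ℕ) : WithBot ℕ) := by
      rw [← hh, degree_lt_iff_coeff_zero]
      intro m hm
      have h1 : q.coeff m = 0 := (degree_lt_iff_coeff_zero _ _).1 hq m (by omega)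
      have h2 : (p (n + 1)).coeff m = 0 :=
        coeff_eq_zero_of_degree_lt (by rw [hdeg]; exact_mod_cast hm)
      simp [h1, h2]
    rw [degree_mul, degree_X_sub_C] at h1
    by_cases h0 : h = 0
    · simp [h0]
    rw [degree_eq_natDegree h0] at h1 ⊢
    norm_cast at h1 ⊢
    omega
  have hXh : X * h = q.eval z • p (n + 1) + (z • h - (p (n + 1)).eval z • q) := by
    have : X * h = (X - C z) * h + z • h := by rw [smul_eq_C_mul]; ring
    rw [this, ← hh]
    abel
  have hpc : (p (n + 1)).coeff (n + 1) = κ (n + 1) := by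
    rw [← hlc (n + 1), leadingCoeff, natDegree_eq_of_degree_eq_some (hdeg _)]
  have hzero : (z • h - (p (n + 1)).eval z • q).degree < ((n + 1 : ℕ) : WithBot ℕ) :=
    lt_of_le_of_lt (degree_sub_le _ _)
      (max_lt ((degree_smul_le _ _).trans_lt hhd) ((degree_smul_le _ _).trans_lt hq))
  have hcoeff : h.coeff n = q.eval z * κ (n + 1) := by
    have := congrArg (fun f => coeff f (n + 1)) hXh
    simp only [coeff_X_mul, coeff_add] at this
    rw [this, (degree_lt_iff_coeff_zero _ _).1 hzero (n + 1) le_rfl]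
    simp [hpc]
  -- Pythagoras: dropping the `p (n + 1)` component of `X h` leaves the compressed multiplication
  -- operator applied to `h`, hence a contraction.
  have hnorm := norm_sq_add_of_inner_zero (norm_eq_one hon (n + 1))
    (inner_eq_zero_of_degree_lt hdeg hκ hlc hon hzero) (q.eval z)
  rw [← map_smul, ← map_add, ← hXh] at hnorm
  have hle : ‖φ (z • h - (p (n + 1)).eval z • q)‖ ≤ ‖φ h‖ := by
    have h1 := pow_le_pow_left₀ (norm_nonneg _) (hX h) 2
    exact (sq_le_sq₀ (norm_nonneg _) (norm_nonneg _)).1 (by nlinarith [sq_nonneg ‖q.eval z‖])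
  have htri : ‖z‖ * ‖φ h‖ ≤ ‖φ h‖ + ‖(p (n + 1)).eval z‖ * ‖φ q‖ := by
    rw [← norm_smul, ← norm_smul]
    have : z • φ h = φ (z • h - (p (n + 1)).eval z • q) + (p (n + 1)).eval z • φ q := by simp
    rw [this]
    exact (norm_add_le _ _).trans (by gcongr)
  have hcs : ‖q.eval z‖ * κ (n + 1) ≤ κ n * ‖φ h‖ := by
    have h1 := norm_inner_le_norm (𝕜 := ℂ) (φ (p n)) (φ h)
    rw [inner_eq_coeff hdeg hκ hlc hon hhd, norm_eq_one hon, one_mul, hcoeff, norm_div, norm_mul,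
      Complex.norm_real, Complex.norm_real, Real.norm_of_nonneg (hκ _).le,
      Real.norm_of_nonneg (hκ _).le, div_le_iff₀ (hκ n)] at h1
    linarith
  have h1 : (‖z‖ - 1) * ‖φ h‖ ≤ ‖(p (n + 1)).eval z‖ * ‖φ q‖ := by linarith
  rw [div_mul_eq_mul_div, le_div_iff₀ (hκ _)]
  calc (‖z‖ - 1) * ‖q.eval z‖ * κ (n + 1) = (‖z‖ - 1) * (‖q.eval z‖ * κ (n + 1)) := by ring
    _ ≤ (‖z‖ - 1) * (κ n * ‖φ h‖) := mul_le_mul_of_nonneg_left hcs (by linarith)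
    _ = κ n * ((‖z‖ - 1) * ‖φ h‖) := by ring
    _ ≤ _ := mul_le_mul_of_nonneg_left h1 (hκ n).le

/-- Projecting `X p n` on `p (n + 1)` leaves a remainder of degree at most `n`; the norm bound is
Pythagoras together with `‖φ (X p n)‖ ≤ 1`. -/
theorem exists_remainder
    (hX : ∀ f, ‖φ (X * f)‖ ≤ ‖φ f‖)
    (hdeg : ∀ n, (p n).degree = n) (hκ : ∀ n, 0 < κ n)
    (hlc : ∀ n, (p n).leadingCoeff = (κ n : ℂ))
    (hon : ∀ n m, ⟪φ (p n), φ (p m)⟫ = if n = m then 1 else 0) (n : ℕ) :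
    ∃ e : ℂ[X], e.degree < (n + 1 : ℕ) ∧
      X * p n = ((κ n / κ (n + 1) : ℝ) : ℂ) • p (n + 1) + e ∧
      (κ n / κ (n + 1)) ^ 2 + ‖φ e‖ ^ 2 ≤ 1 := by
  have hκn : (κ (n + 1) : ℂ) ≠ 0 := by exact_mod_cast (hκ (n + 1)).ne'
  have hpc : ∀ n, (p n).coeff n = κ n := fun n => by
    rw [← hlc n, leadingCoeff, natDegree_eq_of_degree_eq_some (hdeg _)]
  have he : (X * p n - ((κ n / κ (n + 1) : ℝ) : ℂ) • p (n + 1)).degree < ((n + 1 : ℕ) : WithBot ℕ) := by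
    rw [degree_lt_iff_coeff_zero]
    intro m hm
    rcases hm.eq_or_lt with rfl | hm
    · simp [hpc, hκn]
    · obtain ⟨m, rfl⟩ : ∃ k, m = k + 1 := ⟨m - 1, by omega⟩
      have h1 : (p n).coeff m = 0 :=
        coeff_eq_zero_of_degree_lt (by rw [hdeg]; exact_mod_cast (by omega : n < m))
      have h2 : (p (n + 1)).coeff (m + 1) = 0 :=
        coeff_eq_zero_of_degree_lt (by rw [hdeg]; exact_mod_cast hm)
      simp [h1, h2]
  refine ⟨_, he, by abel, ?_⟩
  have h1 := norm_sq_add_of_inner_zero (norm_eq_one hon (n + 1))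
    (inner_eq_zero_of_degree_lt hdeg hκ hlc hon he) ((κ n / κ (n + 1) : ℝ) : ℂ)
  rw [← map_smul, ← map_add, add_sub_cancel, Complex.norm_real, Real.norm_eq_abs, sq_abs] at h1
  rw [← h1]
  exact pow_le_one₀ (norm_nonneg _) ((hX _).trans (norm_eq_one hon n).le)

theorem kappa_ratio_le_one
    (hX : ∀ f, ‖φ (X * f)‖ ≤ ‖φ f‖)
    (hdeg : ∀ n, (p n).degree = n) (hκ : ∀ n, 0 < κ n)
    (hlc : ∀ n, (p n).leadingCoeff = (κ n : ℂ))
    (hon : ∀ n m, ⟪φ (p n), φ (p m)⟫ = if n = m then 1 else 0) (n : ℕ) :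
    κ n / κ (n + 1) ≤ 1 := by
  obtain ⟨e, -, -, he⟩ := exists_remainder hX hdeg hκ hlc hon n
  nlinarith [sq_nonneg ‖φ e‖]

theorem ratio_bound_s7
    (hX : ∀ f, ‖φ (X * f)‖ ≤ ‖φ f‖)
    (hdeg : ∀ n, (p n).degree = n) (hκ : ∀ n, 0 < κ n)
    (hlc : ∀ n, (p n).leadingCoeff = (κ n : ℂ))
    (hon : ∀ n m, ⟪φ (p n), φ (p m)⟫ = if n = m then 1 else 0)
    (n : ℕ) {z : ℂ} (hz : 1 < ‖z‖) :
    ‖z * (p n).eval z / (p (n + 1)).eval z - 1‖ ≤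
      (1 - κ n / κ (n + 1)) + √(1 - (κ n / κ (n + 1)) ^ 2) / (‖z‖ - 1) := by
  have hr1 := kappa_ratio_le_one hX hdeg hκ hlc hon n
  have hr0 : 0 < κ n / κ (n + 1) := div_pos (hκ _) (hκ _)
  have hz' : 0 < ‖z‖ - 1 := by linarith
  have hp0 : (p (n + 1)).eval z ≠ 0 := by
    intro h0
    have hd : (1 : ℂ[X]).degree < (n + 1 : ℕ) := by
      rw [degree_one]; exact_mod_cast n.succ_pos
    have := eval_bound_s7 hX hdeg hκ hlc hon hd hz
    simp [h0] at this
    linarith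
  obtain ⟨e, hed, heq, hen⟩ := exists_remainder hX hdeg hκ hlc hon n
  set r := κ n / κ (n + 1) with hr
  have heval : z * (p n).eval z = (r : ℂ) * (p (n + 1)).eval z + e.eval z := by
    have := congrArg (eval z) heq
    simpa using this
  have hb := eval_bound_s7 hX hdeg hκ hlc hon hed hz
  have hsq : ‖φ e‖ ≤ √(1 - r ^ 2) := Real.le_sqrt_of_sq_le (by linarith)
  have hpos : 0 < ‖(p (n + 1)).eval z‖ := norm_pos_iff.2 hp0
  have h1 : z * (p n).eval z / (p (n + 1)).eval z - 1
      = ((r - 1 : ℝ) : ℂ) + e.eval z / (p (n + 1)).eval z := by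
    rw [heval]; push_cast; field_simp; ring
  rw [h1]
  refine (norm_add_le _ _).trans (add_le_add ?_ ?_)
  · rw [Complex.norm_real, Real.norm_eq_abs, abs_sub_comm, abs_of_nonneg (by linarith)]
  · rw [norm_div, div_le_div_iff₀ hpos hz']
    calc ‖e.eval z‖ * (‖z‖ - 1) ≤ r * (‖(p (n + 1)).eval z‖ * ‖φ e‖) := by linarith
      _ ≤ 1 * (‖(p (n + 1)).eval z‖ * √(1 - r ^ 2)) := by gcongr
      _ = _ := by ring

end Abstract

/-! ### The `L²` realization of polynomials -/

theorem ae_mem_measSupport (μ : Measure ℂ) : ∀ᵐ z ∂μ, z ∈ measSupport μ := by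
  refine measure_null_of_locally_null _ fun x hx => ?_
  have hx' : ¬ ∀ U ∈ 𝓝 x, μ U ≠ 0 := hx
  push Not at hx'
  obtain ⟨U, hU, h0⟩ := hx'
  exact ⟨U, mem_nhdsWithin_of_mem_nhds hU, h0⟩

theorem memLp_eval (μ : Measure ℂ) [IsFiniteMeasure μ] (hμ : ∀ᵐ z ∂μ, ‖z‖ ≤ 1) (f : ℂ[X]) :
    MemLp (fun z => f.eval z) 2 μ := by
  obtain ⟨M, hM⟩ := (isCompact_closedBall (0 : ℂ) 1).exists_bound_of_continuousOn
    (f := fun z => f.eval z) f.continuous.continuousOn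
  refine MemLp.of_bound f.continuous.aestronglyMeasurable M ?_
  filter_upwards [hμ] with z hz
  exact hM z (by simpa using hz)

/-- The class of a polynomial in `L²(μ)`, for a measure `μ` carried by the closed unit disk. -/
def polyToLp (μ : Measure ℂ) [IsFiniteMeasure μ] (hμ : ∀ᵐ z ∂μ, ‖z‖ ≤ 1) :
    ℂ[X] →ₗ[ℂ] Lp ℂ 2 μ where
  toFun f := (memLp_eval μ hμ f).toLp _
  map_add' f g := by
    rw [← MemLp.toLp_add]
    congr 1
    ext z
    simp
  map_smul' c f := by
    rw [RingHom.id_apply, ← MemLp.toLp_const_smul]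
    congr 1
    ext z
    simp

theorem norm_polyToLp_X_mul (μ : Measure ℂ) [IsFiniteMeasure μ] (hμ : ∀ᵐ z ∂μ, ‖z‖ ≤ 1)
    (f : ℂ[X]) : ‖polyToLp μ hμ (X * f)‖ ≤ ‖polyToLp μ hμ f‖ := by
  refine Lp.norm_le_norm_of_ae_le ?_
  filter_upwards [(memLp_eval μ hμ f).coeFn_toLp, (memLp_eval μ hμ (X * f)).coeFn_toLp, hμ]
    with z h1 h2 hz
  change ‖(memLp_eval μ hμ (X * f)).toLp _ z‖ ≤ ‖(memLp_eval μ hμ f).toLp _ z‖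
  rw [h1, h2, eval_mul, eval_X, norm_mul]
  exact mul_le_of_le_one_left (norm_nonneg _) hz

theorem inner_polyToLp (μ : Measure ℂ) [IsFiniteMeasure μ] (hμ : ∀ᵐ z ∂μ, ‖z‖ ≤ 1)
    (f g : ℂ[X]) : inner ℂ (polyToLp μ hμ f) (polyToLp μ hμ g)
      = ∫ z, (starRingEnd ℂ) (f.eval z) * g.eval z ∂μ := by
  rw [L2.inner_def]
  refine integral_congr_ae ?_
  filter_upwards [(memLp_eval μ hμ f).coeFn_toLp, (memLp_eval μ hμ g).coeFn_toLp] with z h1 h2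
  change inner ℂ ((memLp_eval μ hμ f).toLp _ z) ((memLp_eval μ hμ g).toLp _ z) = _
  rw [h1, h2, RCLike.inner_apply, mul_comm]

/-! ### Cesàro null sequences -/

/-- A nonnegative sequence whose Cesàro means tend to zero tends to zero along a set of
density one: with `t n` the supremum of the tail of the means, the exceptional set is where the
sequence exceeds `√(t n)`, and Chebyshev's inequality bounds its counting function. -/
theorem exists_density_one {a : ℕ → ℝ} (ha : ∀ n, 0 ≤ a n)
    (hlim : Tendsto (fun n : ℕ => (∑ k ∈ Finset.Icc 1 n, a k) / n) atTop (𝓝 0)) :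
    ∃ S : Set ℕ, hasDensityOne S ∧ Tendsto a (atTop ⊓ 𝓟 S) (𝓝 0) := by
  -- The summand `1 / (n + 1)` keeps the threshold positive.
  set u : ℕ → ℝ := fun n => (∑ k ∈ Finset.Icc 1 n, a k) / n + 1 / ((n : ℝ) + 1) with hu
  have hulim : Tendsto u atTop (𝓝 0) := by
    simpa [hu] using hlim.add tendsto_one_div_add_atTop_nhds_zero_nat
  have hupos : ∀ n, 0 < u n := fun n =>
    add_pos_of_nonneg_of_pos (div_nonneg (Finset.sum_nonneg fun k _ => ha k) (by positivity))
      (by positivity)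
  have hbdd : ∀ n, BddAbove (Set.range fun m => u (n + m)) := fun n =>
    hulim.bddAbove_range.mono (by rintro _ ⟨m, rfl⟩; exact ⟨n + m, rfl⟩)
  set t : ℕ → ℝ := fun n => ⨆ m, u (n + m) with ht
  have hut : ∀ n, u n ≤ t n := fun n => le_ciSup (hbdd n) 0
  have htpos : ∀ n, 0 < t n := fun n => (hupos n).trans_le (hut n)
  have htanti : ∀ m n, m ≤ n → t n ≤ t m := fun m n hmn => ciSup_le fun k => by
    obtain ⟨d, rfl⟩ := Nat.exists_eq_add_of_le hmn
    rw [add_assoc]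
    exact le_ciSup (hbdd m) (d + k)
  have htlim : Tendsto t atTop (𝓝 0) := by
    refine tendsto_order.2 ⟨fun b hb => Eventually.of_forall fun n => hb.trans (htpos n),
      fun b hb => ?_⟩
    obtain ⟨N, hN⟩ := eventually_atTop.1 (hulim.eventually (gt_mem_nhds (half_pos hb)))
    filter_upwards [eventually_ge_atTop N] with n hn
    exact (ciSup_le fun m => (hN (n + m) (by omega)).le).trans_lt (half_lt_self hb)
  have hslim : Tendsto (fun n => √(t n)) atTop (𝓝 0) := by
    simpa [Function.comp_def] using (Real.continuous_sqrt.tendsto 0).comp htlim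
  refine ⟨{n | a n ≤ √(t n)}, ?_, ?_⟩
  · have hlow : ∀ n : ℕ, 1 ≤ n → 1 - √(t n) ≤
        (Nat.card ↥({n | a n ≤ √(t n)} ∩ Set.Icc 1 n) : ℝ) / n := by
      intro n hn
      have hn0 : (0 : ℝ) < n := by exact_mod_cast hn
      classical
      have hset : {n | a n ≤ √(t n)} ∩ Set.Icc 1 n
          = ((Finset.Icc 1 n).filter fun k => a k ≤ √(t k) : Finset ℕ) := by
        ext k; simp [and_comm]
      have hcard : (Nat.card ↥({n | a n ≤ √(t n)} ∩ Set.Icc 1 n) : ℝ)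
          = ((Finset.Icc 1 n).filter fun k => a k ≤ √(t k)).card := by
        rw [hset, Nat.card_coe_set_eq, Set.ncard_coe_finset]
      have hsum : (((Finset.Icc 1 n).filter fun k => a k ≤ √(t k)).card : ℝ)
          + ((Finset.Icc 1 n).filter fun k => ¬ a k ≤ √(t k)).card = n := by
        have := Finset.card_filter_add_card_filter_not (s := Finset.Icc 1 n)
          (fun k => a k ≤ √(t k))
        rw [Nat.card_Icc] at this
        exact_mod_cast this
      have hcheb : (((Finset.Icc 1 n).filter fun k => ¬ a k ≤ √(t k)).card : ℝ) * √(t n)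
          ≤ ∑ k ∈ Finset.Icc 1 n, a k := by
        rw [← nsmul_eq_mul]
        refine (Finset.card_nsmul_le_sum _ a _ fun k hk => ?_).trans
          (Finset.sum_le_sum_of_subset_of_nonneg (Finset.filter_subset _ _) fun k _ _ => ha k)
        rw [Finset.mem_filter, Finset.mem_Icc] at hk
        exact (Real.sqrt_le_sqrt (htanti k n hk.1.2)).trans (not_le.1 hk.2).le
      have hS : ∑ k ∈ Finset.Icc 1 n, a k ≤ n * t n := by
        have h1 : (∑ k ∈ Finset.Icc 1 n, a k) / n ≤ t n :=
          (le_add_of_nonneg_right (by positivity)).trans (hut n)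
        rw [div_le_iff₀ hn0] at h1
        linarith
      have hsq : 0 < √(t n) := Real.sqrt_pos.2 (htpos n)
      have hbad : (((Finset.Icc 1 n).filter fun k => ¬ a k ≤ √(t k)).card : ℝ) ≤ n * √(t n) := by
        refine le_of_mul_le_mul_right (hcheb.trans (hS.trans ?_)) hsq
        rw [mul_assoc, Real.mul_self_sqrt (htpos n).le]
      rw [hcard, le_div_iff₀ hn0]
      linarith
    have hupp : ∀ n : ℕ, (Nat.card ↥({n | a n ≤ √(t n)} ∩ Set.Icc 1 n) : ℝ) / n ≤ 1 := by
      intro n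
      refine div_le_one_of_le₀ ?_ (by positivity)
      have := Nat.card_mono (Set.finite_Icc 1 n)
        (Set.inter_subset_right (s := {n | a n ≤ √(t n)}) (t := Set.Icc 1 n))
      simpa using this
    refine tendsto_of_tendsto_of_tendsto_of_le_of_le'
      (by simpa using hslim.const_sub 1) tendsto_const_nhds ?_ (Eventually.of_forall hupp)
    filter_upwards [eventually_ge_atTop 1] with n hn using hlow n hn
  · refine tendsto_of_tendsto_of_tendsto_of_le_of_le' tendsto_const_nhds
      (hslim.mono_left inf_le_left) (Eventually.of_forall ha) ?_
    exact mem_inf_of_right (mem_principal_self _)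

/-! ### Ratio asymptotics -/

theorem regular_disk_ratio_asymptotics_along_density_one
    (μ : Measure ℂ) [IsFiniteMeasure μ]
    (hc : IsCompact (measSupport μ)) (hi : (measSupport μ).Infinite)
    (hD : measSupport μ ⊆ Metric.closedBall (0 : ℂ) 1)
    (hcirc : Metric.sphere (0 : ℂ) 1 ⊆ measSupport μ)
    (p : ℕ → Polynomial ℂ) (κ : ℕ → ℝ) (hON : OrthonormalPolys μ p κ)
    (hreg : Tendsto (fun n : ℕ => (κ n) ^ ((n : ℝ)⁻¹)) atTop (𝓝 1)) :
    ∃ 𝒩 : Set ℕ, hasDensityOne 𝒩 ∧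
      ∀ K : Set ℂ, IsCompact K → K ⊆ {z : ℂ | 1 < ‖z‖} →
        TendstoUniformlyOn (fun n z => z * (p (n - 1)).eval z / (p n).eval z)
          (fun _ => (1 : ℂ)) (atTop ⊓ 𝓟 𝒩) K := by
  obtain ⟨hdeg, hκ, hlc, hint⟩ := hON
  have hμ : ∀ᵐ z ∂μ, ‖z‖ ≤ 1 := by
    filter_upwards [ae_mem_measSupport μ] with z hz
    simpa using hD hz
  have hX := norm_polyToLp_X_mul μ hμ
  have hon : ∀ n m, inner ℂ (polyToLp μ hμ (p n)) (polyToLp μ hμ (p m))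
      = if n = m then 1 else 0 := fun n m => by rw [inner_polyToLp, hint]
  have hmono : ∀ n, κ n ≤ κ (n + 1) := fun n =>
    (div_le_one (hκ _)).1 (kappa_ratio_le_one hX hdeg hκ hlc hon n)
  set a : ℕ → ℝ := fun n => Real.log (κ n) - Real.log (κ (n - 1)) with ha
  have ha0 : ∀ n, 0 ≤ a n := fun n => by
    cases n with
    | zero => simp [ha]
    | succ n => exact sub_nonneg.2 (Real.log_le_log (hκ _) (hmono n))
  have hsum : ∀ n, ∑ k ∈ Finset.Icc 1 n, a k = Real.log (κ n) - Real.log (κ 0) := fun n => by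
    induction n with
    | zero => simp
    | succ n ih => rw [Finset.sum_Icc_succ_top (by omega), ih]; simp [ha]
  have hces : Tendsto (fun n : ℕ => (∑ k ∈ Finset.Icc 1 n, a k) / n) atTop (𝓝 0) := by
    have h1 : Tendsto (fun n : ℕ => Real.log (κ n) / n) atTop (𝓝 0) := by
      have := (Real.continuousAt_log one_ne_zero).tendsto.comp hreg
      rw [Real.log_one] at this
      refine this.congr fun n => ?_
      rw [Function.comp_apply, Real.log_rpow (hκ n), div_eq_inv_mul]
    have h2 := h1.sub (tendsto_const_div_atTop_nhds_zero_nat (Real.log (κ 0)))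
    rw [sub_zero] at h2
    refine h2.congr fun n => ?_
    rw [hsum, sub_div]
  obtain ⟨S, hS, hlim⟩ := exists_density_one ha0 hces
  refine ⟨S, hS, fun K hK hK1 => ?_⟩
  obtain ⟨δ, hδ, hδK⟩ : ∃ δ > 0, ∀ z ∈ K, δ ≤ ‖z‖ - 1 := by
    rcases K.eq_empty_or_nonempty with rfl | hne
    · exact ⟨1, one_pos, by simp⟩
    · obtain ⟨w, hw, hmin⟩ := hK.exists_isMinOn hne continuous_norm.continuousOn
      exact ⟨‖w‖ - 1, sub_pos.2 (hK1 hw), fun z hz => sub_le_sub_right (hmin hz) 1⟩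
  have hr : Tendsto (fun n => κ (n - 1) / κ n) (atTop ⊓ 𝓟 S) (𝓝 1) := by
    have := (Real.continuous_exp.tendsto _).comp hlim.neg
    rw [neg_zero, Real.exp_zero] at this
    refine this.congr fun n => ?_
    rw [Function.comp_apply, ha, neg_sub, Real.exp_sub, Real.exp_log (hκ _), Real.exp_log (hκ _)]
  have hb : Tendsto (fun n => (1 - κ (n - 1) / κ n) + √(1 - (κ (n - 1) / κ n) ^ 2) / δ)
      (atTop ⊓ 𝓟 S) (𝓝 0) := by
    have h1 := (hr.const_sub 1).add
      (((Real.continuous_sqrt.tendsto _).comp ((hr.pow 2).const_sub 1)).div_const δ)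
    simpa using h1
  rw [Metric.tendstoUniformlyOn_iff]
  intro ε hε
  filter_upwards [hb.eventually (gt_mem_nhds hε), mem_inf_of_left (eventually_ge_atTop 1)]
    with n hn h1n z hz
  obtain ⟨n, rfl⟩ : ∃ k, n = k + 1 := ⟨n - 1, (Nat.succ_pred_eq_of_pos h1n).symm⟩
  rw [dist_comm, dist_eq_norm]
  rw [Nat.add_sub_cancel] at hn ⊢
  refine ((ratio_bound_s7 hX hdeg hκ hlc hon n (hK1 hz)).trans ?_).trans_lt hn
  have := hδK z hz
  gcongr
end
end

section
/- Let μ be a finite positive Borel measure that is regular on the closed unit disk 𝔻̄, i.e. supp(μ) ⊆ 𝔻̄, the unit circle ∂𝔻 is contained in supp(μ), and κ_n^{1/n} → 1 as n → ∞. Then there exists a set 𝒩 ⊆ ℕ of asymptotic density 1 such that the probability measures |p_n(z;μ)|² dμ(z) converge weakly, as n → ∞ through 𝒩, to normalized arc-length measure on the unit circle; that is, for every bounded continuous f : ℂ → ℂ, ∫ f(z)|p_n(z;μ)|² dμ(z) → (1/2π)∫₀^{2π} f(e^{iθ}) dθ as n → ∞ through 𝒩. -/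
/-!
Write `a n = κ n / κ (n + 1)`. Orthogonality gives `⟨p (n + 1), z p n⟩ = a n`, and since `|z| ≤ 1`
on the support of `μ`, multiplication by `z` is a contraction of `L²(μ)`, so that
`‖z p n - p (n + 1)‖² = ‖z p n‖² + 1 - 2 a n ≤ 2 (1 - a n)`. In particular `a n ≤ 1`,
while `a n > 0` by the normalization of the leading coefficients.

The product of `a 0, …, a (n - 1)` is `κ 0 / κ n`, so `κ n ^ (1 / n) → 1` together with
`1 - a ≤ -log a` makes the averages of `1 - a j` tend to zero. By a Koopman–von Neumann argument
(`exists_density_one_tendsto`) there is one set of density one along which `1 - a (n + i) → 0` for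
every fixed `i`.

Along this set `z ^ m p n` is close in `L²(μ)` to `p (n + m)` (`tendsto_polyNormSq_shift`), which is
orthogonal to `p n` for `m ≥ 1`; hence the moments `∫ z ^ m |p n|² dμ` tend to those of arc length.
Moreover `∫ (1 - |z|²) |p n|² dμ ≤ 2 (1 - a n)`, so the measures concentrate on the circle, which
gives all the mixed moments of `z` and `conj z` (`meanConverges_pow_mul_conj_pow`).
Stone–Weierstrass on the closed disk finishes the proof.
-/

open MeasureTheory Filter Topology Polynomial

noncomputable section

/-! ### The L² pairing of polynomials -/

/-- The pairing `⟨q, r⟩ = ∫ conj(q) r dμ` of polynomials, conjugate-linear in the first argument. -/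
def polyInner (μ : Measure ℂ) (q r : ℂ[X]) : ℂ :=
  ∫ z, (starRingEnd ℂ) (q.eval z) * r.eval z ∂μ

/-- The squared `L²(μ)` norm of a polynomial, as a real number. -/
def polyNormSq (μ : Measure ℂ) (q : ℂ[X]) : ℝ := ∫ z, ‖q.eval z‖ ^ 2 ∂μ

section Pairing

variable {μ : Measure ℂ}

lemma polyInner_C_mul (c : ℂ) (q r : ℂ[X]) :
    polyInner μ q (C c * r) = c * polyInner μ q r := by
  unfold polyInner
  rw [← integral_const_mul]
  congr 1; ext z; simp; ring

lemma polyNormSq_nonneg (q : ℂ[X]) : 0 ≤ polyNormSq μ q :=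
  integral_nonneg fun _ => by positivity

lemma polyInner_self (q : ℂ[X]) : polyInner μ q q = (polyNormSq μ q : ℂ) := by
  unfold polyInner polyNormSq
  rw [← integral_complex_ofReal]
  congr 1; ext z
  rw [Complex.conj_mul']; push_cast; rfl

variable [IsFiniteMeasure μ]

lemma integrable_of_continuous (hb : ∀ᵐ z ∂μ, ‖z‖ ≤ 1)
    {E : Type*} [NormedAddCommGroup E] [SecondCountableTopology E]
    {g : ℂ → E} (hg : Continuous g) : Integrable g μ := by
  obtain ⟨C, hC⟩ := (isCompact_closedBall (0 : ℂ) 1).exists_bound_of_continuousOn hg.continuousOn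
  refine Integrable.of_bound hg.aestronglyMeasurable C ?_
  filter_upwards [hb] with z hz
  exact hC z (by simpa using hz)

lemma polyInner_sub (hb : ∀ᵐ z ∂μ, ‖z‖ ≤ 1) (q r s : ℂ[X]) :
    polyInner μ q (r - s) = polyInner μ q r - polyInner μ q s := by
  unfold polyInner
  rw [← integral_sub (integrable_of_continuous hb (by fun_prop))
    (integrable_of_continuous hb (by fun_prop))]
  simp [mul_sub]

lemma polyNormSq_sub (hb : ∀ᵐ z ∂μ, ‖z‖ ≤ 1) (q r : ℂ[X]) :
    polyNormSq μ (q - r) = polyNormSq μ q + polyNormSq μ r - 2 * (polyInner μ r q).re := by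
  have h : (polyInner μ r q).re = ∫ z, ((starRingEnd ℂ) (r.eval z) * q.eval z).re ∂μ :=
    (integral_re (f := fun z => (starRingEnd ℂ) (r.eval z) * q.eval z)
      (integrable_of_continuous hb (by fun_prop))).symm
  rw [h, ← integral_const_mul]
  unfold polyNormSq
  rw [← integral_add (integrable_of_continuous hb (by fun_prop))
    (integrable_of_continuous hb (by fun_prop)),
    ← integral_sub (integrable_of_continuous hb (by fun_prop))
    (integrable_of_continuous hb (by fun_prop))]
  congr 1; ext z
  simp only [eval_sub, ← Complex.normSq_eq_norm_sq, Complex.normSq_apply, Complex.sub_re,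
    Complex.sub_im, Complex.mul_re, Complex.conj_re, Complex.conj_im]
  ring

lemma polyNormSq_add_le (hb : ∀ᵐ z ∂μ, ‖z‖ ≤ 1) (q r : ℂ[X]) :
    polyNormSq μ (q + r) ≤ 2 * polyNormSq μ q + 2 * polyNormSq μ r := by
  unfold polyNormSq
  rw [← integral_const_mul, ← integral_const_mul,
    ← integral_add (integrable_of_continuous hb (by fun_prop))
    (integrable_of_continuous hb (by fun_prop))]
  refine integral_mono (integrable_of_continuous hb (by fun_prop))
    (integrable_of_continuous hb (by fun_prop)) fun z => ?_
  have h := norm_add_le (q.eval z) (r.eval z)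
  simp only [eval_add]
  nlinarith [norm_nonneg (q.eval z + r.eval z), sq_nonneg (‖q.eval z‖ - ‖r.eval z‖)]

lemma polyNormSq_X_mul_le (hb : ∀ᵐ z ∂μ, ‖z‖ ≤ 1) (q : ℂ[X]) :
    polyNormSq μ (X * q) ≤ polyNormSq μ q := by
  refine integral_mono_ae (integrable_of_continuous hb (by fun_prop))
    (integrable_of_continuous hb (by fun_prop)) ?_
  filter_upwards [hb] with z hz
  simp only [eval_mul, eval_X, norm_mul, mul_pow]
  exact mul_le_of_le_one_left (by positivity) (pow_le_one₀ (norm_nonneg _) hz)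

/-- The Cauchy–Schwarz inequality. -/
lemma norm_polyInner_le (hb : ∀ᵐ z ∂μ, ‖z‖ ≤ 1) (q r : ℂ[X]) :
    ‖polyInner μ q r‖ ≤ √(polyNormSq μ q) * √(polyNormSq μ r) := by
  have hmem : ∀ s : ℂ[X], MemLp (fun z => s.eval z) (ENNReal.ofReal 2) μ := fun s => by
    rw [ENNReal.ofReal_ofNat]
    exact (memLp_two_iff_integrable_sq_norm (by fun_prop)).2
      (integrable_of_continuous hb (by fun_prop))
  have h := integral_mul_norm_le_Lp_mul_Lq (μ := μ) (f := fun z => q.eval z)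
    (g := fun z => r.eval z) Real.HolderConjugate.two_two (hmem q) (hmem r)
  simp only [Real.rpow_two, ← Real.sqrt_eq_rpow] at h
  refine (norm_integral_le_integral_norm _).trans ?_
  simpa [polyNormSq] using h

end Pairing

/-! ### Orthonormal polynomials -/

/-- How far the subdiagonal entry `κ n / κ (n + 1)` falls short of `1`. -/
def defect (κ : ℕ → ℝ) (n : ℕ) : ℝ := 1 - κ n / κ (n + 1)

section Orthonormal

variable {μ : Measure ℂ} {p : ℕ → ℂ[X]} {κ : ℕ → ℝ}

lemma polyNormSq_p (hON : OrthonormalPolys μ p κ) (n : ℕ) : polyNormSq μ (p n) = 1 := by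
  have h : polyInner μ (p n) (p n) = 1 := by
    unfold polyInner
    rw [hON.2.2.2, if_pos rfl]
  rw [polyInner_self] at h
  exact_mod_cast h

lemma defect_le_one (hON : OrthonormalPolys μ p κ) (n : ℕ) : defect κ n ≤ 1 := by
  have := div_pos (hON.2.1 n) (hON.2.1 (n + 1))
  unfold defect; linarith

variable [IsFiniteMeasure μ]

lemma polyInner_eq_zero_of_degree_lt (hb : ∀ᵐ z ∂μ, ‖z‖ ≤ 1) (hON : OrthonormalPolys μ p κ)
    {m : ℕ} (q : ℂ[X]) (hq : q.degree < m) : polyInner μ (p m) q = 0 := by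
  obtain ⟨hdeg, hpos, hlc, horth⟩ := hON
  have key : ∀ d : ℕ, d ≤ m → ∀ q : ℂ[X], q.degree < d → polyInner μ (p m) q = 0 := by
    intro d
    induction d with
    | zero =>
      intro _ q hq
      have : q = 0 := by
        rw [← Polynomial.degree_eq_bot]
        simpa [Nat.WithBot.lt_zero_iff] using hq
      simp [this, polyInner]
    | succ d ih =>
      intro hd q hq
      have hc : (p d).coeff d = (κ d : ℂ) := by
        rw [← hlc d, leadingCoeff, natDegree_eq_of_degree_eq_some (hdeg d)]
      have hk : (κ d : ℂ) ≠ 0 := by exact_mod_cast (hpos d).ne'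
      have hlt : (q - C (q.coeff d / κ d) * p d).degree < d := by
        rw [degree_lt_iff_coeff_zero]
        intro j hj
        rcases hj.eq_or_lt with rfl | hj
        · simp [hc, hk]
        · have h1 : q.coeff j = 0 := (degree_lt_iff_coeff_zero q (d + 1)).1 hq j hj
          have h2 : (p d).coeff j = 0 :=
            coeff_eq_zero_of_degree_lt (by rw [hdeg d]; exact_mod_cast hj)
          simp [h1, h2]
      have h := ih (by omega) _ hlt
      rw [polyInner_sub hb, polyInner_C_mul] at h
      have h0 : polyInner μ (p m) (p d) = 0 := by
        unfold polyInner
        rw [horth, if_neg (by omega)]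
      simpa [h0] using h
  exact key m le_rfl q hq

/-- The subdiagonal entry of multiplication by `z` in the orthonormal basis. -/
lemma polyInner_X_mul (hb : ∀ᵐ z ∂μ, ‖z‖ ≤ 1) (hON : OrthonormalPolys μ p κ) (n : ℕ) :
    polyInner μ (p (n + 1)) (X * p n) = ((κ n / κ (n + 1) : ℝ) : ℂ) := by
  have hlt : (X * p n - C ((κ n / κ (n + 1) : ℝ) : ℂ) * p (n + 1)).degree <
      ((n + 1 : ℕ) : WithBot ℕ) := by
    obtain ⟨hdeg, hpos, hlc, -⟩ := hON
    have hc : ∀ d, (p d).coeff d = (κ d : ℂ) := fun d => by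
      rw [← hlc d, leadingCoeff, natDegree_eq_of_degree_eq_some (hdeg d)]
    have hk : (κ (n + 1) : ℂ) ≠ 0 := by exact_mod_cast (hpos _).ne'
    rw [degree_lt_iff_coeff_zero]
    intro j hj
    rcases hj.eq_or_lt with rfl | hj
    · simp [hc, hk]
    · obtain ⟨i, rfl⟩ : ∃ i, j = i + 1 := ⟨j - 1, by omega⟩
      have h1 : (p n).coeff i = 0 :=
        coeff_eq_zero_of_degree_lt (by rw [hdeg]; exact_mod_cast (by omega : n < i))
      have h2 : (p (n + 1)).coeff (i + 1) = 0 :=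
        coeff_eq_zero_of_degree_lt (by rw [hdeg]; exact_mod_cast hj)
      simp [h1, h2]
  have h := polyInner_eq_zero_of_degree_lt hb hON _ hlt
  have h1 : polyInner μ (p (n + 1)) (p (n + 1)) = 1 := by
    unfold polyInner
    rw [hON.2.2.2, if_pos rfl]
  rw [polyInner_sub hb, polyInner_C_mul, h1, mul_one, sub_eq_zero] at h
  exact h

lemma polyNormSq_X_mul_sub (hb : ∀ᵐ z ∂μ, ‖z‖ ≤ 1) (hON : OrthonormalPolys μ p κ) (n : ℕ) :
    polyNormSq μ (X * p n - p (n + 1)) =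
      polyNormSq μ (X * p n) + 1 - 2 * (1 - defect κ n) := by
  rw [polyNormSq_sub hb, polyInner_X_mul hb hON, polyNormSq_p hON, Complex.ofReal_re, defect]
  ring

lemma defect_nonneg (hb : ∀ᵐ z ∂μ, ‖z‖ ≤ 1) (hON : OrthonormalPolys μ p κ) (n : ℕ) :
    0 ≤ defect κ n := by
  have h1 := polyNormSq_X_mul_sub hb hON n
  have h2 := polyNormSq_X_mul_le hb (p n)
  have h3 := polyNormSq_nonneg (μ := μ) (X * p n - p (n + 1))
  rw [polyNormSq_p hON] at h2
  linarith

/-- Where the defects vanish asymptotically, multiplication by `z ^ k` acts as the shift by `k`. -/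
lemma tendsto_polyNormSq_shift (hb : ∀ᵐ z ∂μ, ‖z‖ ≤ 1) (hON : OrthonormalPolys μ p κ)
    {F : Filter ℕ} (hF : ∀ i, Tendsto (fun n => defect κ (n + i)) F (𝓝 0)) (k : ℕ) :
    Tendsto (fun n => polyNormSq μ (X ^ k * p n - p (n + k))) F (𝓝 0) := by
  induction k with
  | zero => simp [polyNormSq, tendsto_const_nhds]
  | succ k ih =>
    have hlim : Tendsto (fun n => 2 * polyNormSq μ (X ^ k * p n - p (n + k))
        + 2 * (2 * defect κ (n + k))) F (𝓝 0) := by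
      simpa using (ih.const_mul 2).add (((hF k).const_mul 2).const_mul 2)
    refine squeeze_zero (fun _ => polyNormSq_nonneg _) (fun n => ?_) hlim
    have e : X ^ (k + 1) * p n - p (n + (k + 1)) =
        X * (X ^ k * p n - p (n + k)) + (X * p (n + k) - p (n + k + 1)) := by
      rw [← add_assoc]; ring
    rw [e]
    have h1 := polyNormSq_add_le hb (X * (X ^ k * p n - p (n + k)))
      (X * p (n + k) - p (n + k + 1))
    have h2 := polyNormSq_X_mul_le hb (X ^ k * p n - p (n + k))
    have h3 := polyNormSq_X_mul_sub hb hON (n + k)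
    have h4 := polyNormSq_X_mul_le hb (p (n + k))
    rw [polyNormSq_p hON] at h4
    linarith

end Orthonormal

/-! ### Sets of density one -/

/-- The averages of the defects are controlled by `log κ n / n`, since `1 - a ≤ -log a`. -/
lemma tendsto_defect_average {κ : ℕ → ℝ} (hpos : ∀ n, 0 < κ n)
    (hd : ∀ n, 0 ≤ defect κ n)
    (hreg : Tendsto (fun n : ℕ => (κ n) ^ ((n : ℝ)⁻¹)) atTop (𝓝 1)) :
    Tendsto (fun n : ℕ => (∑ j ∈ Finset.range n, defect κ j) / n) atTop (𝓝 0) := by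
  have hle : ∀ n, ∑ j ∈ Finset.range n, defect κ j ≤ Real.log (κ n) - Real.log (κ 0) := by
    intro n
    rw [← Finset.sum_range_sub (fun j => Real.log (κ j))]
    refine Finset.sum_le_sum fun j _ => ?_
    have h := Real.log_le_sub_one_of_pos (div_pos (hpos j) (hpos (j + 1)))
    rw [Real.log_div (hpos _).ne' (hpos _).ne'] at h
    unfold defect; linarith
  have hlog : Tendsto (fun n : ℕ => Real.log (κ n) / n) atTop (𝓝 0) := by
    have h := hreg.log one_ne_zero
    rw [Real.log_one] at h
    refine h.congr fun n => ?_
    rw [Real.log_rpow (hpos n)]; field_simp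
  have hup : Tendsto (fun n : ℕ => (Real.log (κ n) - Real.log (κ 0)) / n) atTop (𝓝 0) := by
    simpa [sub_div] using hlog.sub (tendsto_const_div_atTop_nhds_zero_nat (Real.log (κ 0)))
  refine squeeze_zero (fun n => ?_) (fun n => ?_) hup
  · exact div_nonneg (Finset.sum_nonneg fun j _ => hd j) (by positivity)
  · exact div_le_div_of_nonneg_right (hle n) (by positivity)

/-- An increasing sequence of density-zero sets `A k` is almost contained in one density-zero
set: for a slowly growing `g`, the set of `n` with `n ∈ A (g n)` has density zero. -/
lemma exists_slow_diagonal (A : ℕ → Set ℕ) (hA : Monotone A)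
    (h0 : ∀ k, Tendsto (fun n : ℕ => ((A k ∩ Set.Icc 1 n).ncard : ℝ) / n) atTop (𝓝 0)) :
    ∃ g : ℕ → ℕ, Tendsto g atTop atTop ∧
      Tendsto (fun n : ℕ => (({m | m ∈ A (g m)} ∩ Set.Icc 1 n).ncard : ℝ) / n) atTop (𝓝 0) := by
  classical
  set u : ℕ → ℕ → ℝ := fun k n => ((A k ∩ Set.Icc 1 n).ncard : ℝ) / n with hu
  let P : ℕ → ℕ → Prop := fun n k => ∀ m ≥ n, u k m ≤ 1 / ((k : ℝ) + 1)
  -- Taking the largest `k ≤ n` for which the bound holds from `n` onwards makes `g` monotone.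
  let g : ℕ → ℕ := fun n => Nat.findGreatest (P n) n
  have hP0 : ∀ n, P n 0 := fun n m _ => by
    have h1 : (A 0 ∩ Set.Icc 1 m).ncard ≤ m := by
      refine (Set.ncard_le_ncard Set.inter_subset_right (Set.finite_Icc _ _)).trans ?_
      rw [← Finset.coe_Icc, Set.ncard_coe_finset]; simp
    simp only [hu, Nat.cast_zero, zero_add, div_one]
    exact div_le_one_of_le₀ (by exact_mod_cast h1) (by positivity)
  have hPg : ∀ n, P n (g n) := fun n => Nat.findGreatest_spec (Nat.zero_le n) (hP0 n)
  have hgm : Monotone g := fun n n' h =>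
    Nat.le_findGreatest ((Nat.findGreatest_le n).trans h) fun m hm => hPg n m (h.trans hm)
  have hgt : Tendsto g atTop atTop := by
    refine tendsto_atTop.2 fun K => ?_
    have hK : ∀ᶠ n in atTop, u K n ≤ 1 / ((K : ℝ) + 1) :=
      (h0 K).eventually_le_const (by positivity)
    obtain ⟨N, hN⟩ := eventually_atTop.1 hK
    filter_upwards [eventually_ge_atTop (max N K)] with n hn
    exact Nat.le_findGreatest ((le_max_right _ _).trans hn)
      fun m hm => hN m ((le_max_left _ _).trans (hn.trans hm))
  refine ⟨g, hgt, squeeze_zero (fun n => by positivity) (fun n => ?_)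
    (tendsto_one_div_add_atTop_nhds_zero_nat.comp hgt)⟩
  refine le_trans ?_ (hPg n n le_rfl)
  refine div_le_div_of_nonneg_right ?_ (by positivity)
  refine Nat.cast_le.2 (Set.ncard_le_ncard ?_ ((Set.finite_Icc _ _).subset Set.inter_subset_right))
  exact fun m hm => ⟨hA (hgm hm.2.2) hm.1, hm.2⟩

lemma hasDensityOne_compl {B : Set ℕ}
    (hB : Tendsto (fun n : ℕ => ((B ∩ Set.Icc 1 n).ncard : ℝ) / n) atTop (𝓝 0)) :
    hasDensityOne Bᶜ := by
  have h := hB.const_sub 1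
  rw [sub_zero] at h
  refine h.congr' ?_
  filter_upwards [eventually_gt_atTop 0] with n hn
  have hn' : (n : ℝ) ≠ 0 := by positivity
  have hcard : (Set.Icc 1 n ∩ B).ncard + (Set.Icc 1 n \ B).ncard = n := by
    rw [Set.ncard_inter_add_ncard_sdiff_eq_ncard _ _ (Set.finite_Icc _ _),
      ← Finset.coe_Icc, Set.ncard_coe_finset]
    simp
  have hcard' : ((B ∩ Set.Icc 1 n).ncard : ℝ) + (Nat.card ↥(Bᶜ ∩ Set.Icc 1 n) : ℝ) = n := by
    rw [Set.inter_comm Bᶜ, ← Set.sdiff_eq, Set.inter_comm B, Nat.card_coe_set_eq]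
    exact_mod_cast hcard
  field_simp
  linarith

/-- A bounded nonnegative sequence with vanishing averages tends to zero, together with all its
shifts, along a set of density one. -/
lemma exists_density_one_tendsto (d : ℕ → ℝ) (hd0 : ∀ n, 0 ≤ d n) (hd1 : ∀ n, d n ≤ 1)
    (hav : Tendsto (fun n : ℕ => (∑ j ∈ Finset.range n, d j) / n) atTop (𝓝 0)) :
    ∃ S : Set ℕ, hasDensityOne S ∧
      ∀ i, Tendsto (fun n => d (n + i)) (atTop ⊓ 𝓟 S) (𝓝 0) := by
  set w : ℕ → ℕ → ℝ := fun k n => ∑ i ∈ Finset.range (k + 1), d (n + i) with hw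
  have hw0 : ∀ k n, 0 ≤ w k n := fun k n => Finset.sum_nonneg fun i _ => hd0 _
  let A : ℕ → Set ℕ := fun k => {n | 1 / ((k : ℝ) + 1) ≤ w k n}
  have hA : Monotone A := fun k k' h n hn => by
    have hn : 1 / ((k : ℝ) + 1) ≤ w k n := hn
    have h : k ≤ k' := h
    change 1 / ((k' : ℝ) + 1) ≤ w k' n
    refine (one_div_le_one_div_of_le (by positivity)
      (by gcongr : (k : ℝ) + 1 ≤ (k' : ℝ) + 1)).trans (hn.trans ?_)
    exact Finset.sum_le_sum_of_subset_of_nonneg (Finset.range_subset_range.2 (by omega))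
      fun i _ _ => hd0 _
  have hshift : ∀ i n, ∑ j ∈ Finset.Icc 1 n, d (j + i) ≤ ∑ j ∈ Finset.range n, d j + (i + 1) := by
    intro i n
    have h1 : ∑ j ∈ Finset.Icc 1 n, d (j + i) ≤ ∑ j ∈ Finset.range (n + (i + 1)), d j := by
      rw [← Finset.sum_image (s := Finset.Icc 1 n) (g := fun j => j + i) (f := d)
        (fun a _ b _ h => by simpa using h)]
      refine Finset.sum_le_sum_of_subset_of_nonneg (fun x hx => ?_) fun _ _ _ => hd0 _
      simp only [Finset.mem_image, Finset.mem_Icc, Finset.mem_range] at hx ⊢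
      omega
    refine h1.trans ?_
    rw [Finset.sum_range_add]
    gcongr
    calc _ ≤ ∑ _j ∈ Finset.range (i + 1), (1 : ℝ) := Finset.sum_le_sum fun j _ => hd1 _
      _ = i + 1 := by simp
  have h0 : ∀ k, Tendsto (fun n : ℕ => ((A k ∩ Set.Icc 1 n).ncard : ℝ) / n) atTop (𝓝 0) := by
    intro k
    have hlim : Tendsto (fun n : ℕ => ((k : ℝ) + 1) * ∑ i ∈ Finset.range (k + 1),
        ((∑ j ∈ Finset.range n, d j) / n + ((i : ℝ) + 1) / n)) atTop (𝓝 0) := by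
      have : Tendsto (fun n : ℕ => ∑ i ∈ Finset.range (k + 1),
        ((∑ j ∈ Finset.range n, d j) / n + ((i : ℝ) + 1) / n)) atTop
          (𝓝 (∑ _i ∈ Finset.range (k + 1), (0 + 0))) :=
        tendsto_finsetSum _ fun i _ => hav.add (tendsto_const_div_atTop_nhds_zero_nat _)
      simpa using this.const_mul ((k : ℝ) + 1)
    refine squeeze_zero (fun n => by positivity) (fun n => ?_) hlim
    have hmarkov : ((A k ∩ Set.Icc 1 n).ncard : ℝ) ≤
        ((k : ℝ) + 1) * ∑ j ∈ Finset.Icc 1 n, w k j := by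
      classical
      have e : A k ∩ Set.Icc 1 n = ((Finset.Icc 1 n).filter (· ∈ A k) : Finset ℕ) := by
        ext; simp [and_comm]
      rw [e, Set.ncard_coe_finset, Finset.mul_sum, Finset.card_eq_sum_ones]
      push_cast
      calc ∑ _j ∈ (Finset.Icc 1 n).filter (· ∈ A k), (1 : ℝ)
          ≤ ∑ j ∈ (Finset.Icc 1 n).filter (· ∈ A k), ((k : ℝ) + 1) * w k j := by
            refine Finset.sum_le_sum fun j hj => ?_
            have hj : 1 / ((k : ℝ) + 1) ≤ w k j := (Finset.mem_filter.1 hj).2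
            rwa [div_le_iff₀' (by positivity)] at hj
        _ ≤ _ := Finset.sum_le_sum_of_subset_of_nonneg (Finset.filter_subset _ _)
            fun j _ _ => mul_nonneg (by positivity) (hw0 k j)
    have hsum : ∑ j ∈ Finset.Icc 1 n, w k j ≤
        ∑ i ∈ Finset.range (k + 1), (∑ j ∈ Finset.range n, d j + ((i : ℝ) + 1)) := by
      rw [hw, Finset.sum_comm]
      exact Finset.sum_le_sum fun i _ => hshift i n
    simp only [← add_div]
    rw [← Finset.sum_div, ← mul_div_assoc]
    gcongr
    exact hmarkov.trans (mul_le_mul_of_nonneg_left hsum (by positivity))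
  obtain ⟨g, hg, hB⟩ := exists_slow_diagonal A hA h0
  refine ⟨_, hasDensityOne_compl hB, fun i => ?_⟩
  have hlim : Tendsto (fun n => 1 / ((g n : ℝ) + 1)) (atTop ⊓ 𝓟 {m | m ∈ A (g m)}ᶜ) (𝓝 0) :=
    (tendsto_one_div_add_atTop_nhds_zero_nat.comp hg).mono_left inf_le_left
  refine squeeze_zero' (.of_forall fun n => hd0 _) ?_ hlim
  rw [eventually_inf_principal]
  filter_upwards [hg.eventually_ge_atTop i] with n hn hnA
  have hnA : w (g n) n < 1 / ((g n : ℝ) + 1) := not_le.1 hnA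
  exact (Finset.single_le_sum (f := fun i => d (n + i)) (fun i _ => hd0 _)
    (Finset.mem_range.2 (by omega))).trans hnA.le

/-! ### Limits of the moments -/

/-- The mean of `G` over the unit circle. -/
def circleMean (G : ℂ → ℂ) : ℂ :=
  (∫ θ in (0 : ℝ)..(2 * Real.pi), G (Complex.exp (θ * Complex.I))) / ((2 * Real.pi : ℝ) : ℂ)

/-- The integral of `G` against the probability measure `|q|² dμ`. -/
def sqMean (μ : Measure ℂ) (q : ℂ[X]) (G : ℂ → ℂ) : ℂ :=
  ∫ z, G z * ((‖q.eval z‖ ^ 2 : ℝ) : ℂ) ∂μ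

/-- `G` is continuous and `∫ G |p n|² dμ` tends along `F` to the mean of `G` over the circle. -/
def MeanConverges (μ : Measure ℂ) (p : ℕ → ℂ[X]) (F : Filter ℕ) (G : ℂ → ℂ) : Prop :=
  Continuous G ∧ Tendsto (fun n => sqMean μ (p n) G) F (𝓝 (circleMean G))

section Moments

lemma circleMean_congr {G H : ℂ → ℂ} (h : ∀ z, ‖z‖ = 1 → G z = H z) :
    circleMean G = circleMean H := by
  unfold circleMean
  congr 1
  exact intervalIntegral.integral_congr fun θ _ => h _ (Complex.norm_exp_ofReal_mul_I θ)

lemma circleMean_const (c : ℂ) : circleMean (fun _ => c) = c := by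
  have : (Real.pi : ℂ) ≠ 0 := by exact_mod_cast Real.pi_ne_zero
  simp only [circleMean, intervalIntegral.integral_const, sub_zero, Complex.real_smul]
  push_cast; field_simp

lemma circleMean_pow {m : ℕ} (hm : m ≠ 0) : circleMean (fun z => z ^ m) = 0 := by
  have hc : (m : ℂ) * Complex.I ≠ 0 := mul_ne_zero (by exact_mod_cast hm) Complex.I_ne_zero
  have e : ∀ θ : ℝ, Complex.exp (θ * Complex.I) ^ m = Complex.exp ((m * Complex.I) * θ) :=
    fun θ => by rw [← Complex.exp_nat_mul]; ring_nf
  simp only [circleMean, e]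
  rw [integral_exp_mul_complex hc]
  have h1 : Complex.exp (m * Complex.I * ((2 * Real.pi : ℝ) : ℂ)) = 1 := by
    rw [← Complex.exp_nat_mul_two_pi_mul_I m]; push_cast; ring_nf
  rw [h1]; simp

lemma circleMean_sub {G H : ℂ → ℂ} (hG : Continuous G) (hH : Continuous H) :
    circleMean (G - H) = circleMean G - circleMean H := by
  unfold circleMean
  rw [← sub_div, ← intervalIntegral.integral_sub
    ((by fun_prop : Continuous _).intervalIntegrable _ _)
    ((by fun_prop : Continuous _).intervalIntegrable _ _)]
  rfl

lemma norm_circleMean_le {G : ℂ → ℂ} {ε : ℝ} (h : ∀ z, ‖z‖ = 1 → ‖G z‖ ≤ ε) :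
    ‖circleMean G‖ ≤ ε := by
  have h2 : (0 : ℝ) < 2 * Real.pi := by positivity
  unfold circleMean
  rw [norm_div, Complex.norm_real, Real.norm_of_nonneg h2.le, div_le_iff₀ h2]
  have := intervalIntegral.norm_integral_le_of_norm_le_const (a := 0) (b := 2 * Real.pi)
    (f := fun θ : ℝ => G (Complex.exp (θ * Complex.I))) (C := ε)
    fun θ _ => h _ (Complex.norm_exp_ofReal_mul_I θ)
  rwa [sub_zero, abs_of_pos h2] at this

variable {μ : Measure ℂ} {p : ℕ → ℂ[X]} {κ : ℕ → ℝ} {F : Filter ℕ}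

lemma MeanConverges.smul (c : ℂ) {G : ℂ → ℂ} (hG : MeanConverges μ p F G) :
    MeanConverges μ p F (fun z => c * G z) := by
  refine ⟨hG.1.const_mul c, ?_⟩
  have e1 : ∀ n, sqMean μ (p n) (fun z => c * G z) = c * sqMean μ (p n) G := fun n => by
    unfold sqMean
    rw [← integral_const_mul]
    simp only [mul_assoc]
  have e2 : circleMean (fun z => c * G z) = c * circleMean G := by
    unfold circleMean
    rw [intervalIntegral.integral_const_mul, mul_div_assoc]
  simp only [e1, e2]
  exact hG.2.const_mul c

lemma MeanConverges.conj {G : ℂ → ℂ} (hG : MeanConverges μ p F G) :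
    MeanConverges μ p F (fun z => (starRingEnd ℂ) (G z)) := by
  refine ⟨Complex.continuous_conj.comp hG.1, ?_⟩
  have e1 : ∀ n, sqMean μ (p n) (fun z => (starRingEnd ℂ) (G z)) =
      (starRingEnd ℂ) (sqMean μ (p n) G) := fun n => by
    unfold sqMean
    rw [← integral_conj]
    simp only [map_mul, Complex.conj_ofReal]
  have e2 : circleMean (fun z => (starRingEnd ℂ) (G z)) = (starRingEnd ℂ) (circleMean G) := by
    unfold circleMean
    rw [intervalIntegral.intervalIntegral_conj, map_div₀, Complex.conj_ofReal]
  simp only [e1, e2]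
  exact (Complex.continuous_conj.tendsto _).comp hG.2

variable [IsFiniteMeasure μ]

lemma sqMean_sub (hb : ∀ᵐ z ∂μ, ‖z‖ ≤ 1) (q : ℂ[X]) {G H : ℂ → ℂ} (hG : Continuous G)
    (hH : Continuous H) : sqMean μ q (G - H) = sqMean μ q G - sqMean μ q H := by
  unfold sqMean
  rw [← integral_sub (integrable_of_continuous hb (by fun_prop))
    (integrable_of_continuous hb (by fun_prop))]
  simp [sub_mul]

/-- A function dominated on the disk by a continuous `φ` has its mean dominated by that of `φ`. -/
lemma norm_sqMean_le (hb : ∀ᵐ z ∂μ, ‖z‖ ≤ 1) (q : ℂ[X]) {G : ℂ → ℂ} {φ : ℂ → ℝ}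
    (hφ : Continuous φ) (h : ∀ z, ‖z‖ ≤ 1 → ‖G z‖ ≤ φ z) :
    ‖sqMean μ q G‖ ≤ ∫ z, φ z * ‖q.eval z‖ ^ 2 ∂μ := by
  refine norm_integral_le_of_norm_le (integrable_of_continuous hb (by fun_prop)) ?_
  filter_upwards [hb] with z hz
  rw [norm_mul, Complex.norm_real, Real.norm_of_nonneg (by positivity)]
  exact mul_le_mul_of_nonneg_right (h z hz) (by positivity)

lemma MeanConverges.add (hb : ∀ᵐ z ∂μ, ‖z‖ ≤ 1) {G H : ℂ → ℂ} (hG : MeanConverges μ p F G)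
    (hH : MeanConverges μ p F H) : MeanConverges μ p F (fun z => G z + H z) := by
  have hs : Continuous (fun z => G z + H z) := hG.1.add hH.1
  refine ⟨hs, ?_⟩
  have e : (fun z => G z + H z) - H = G := by ext z; simp
  have e1 : ∀ n, sqMean μ (p n) (fun z => G z + H z) = sqMean μ (p n) G + sqMean μ (p n) H :=
    fun n => by
      have h := sqMean_sub hb (p n) hs hH.1
      rw [e] at h; rw [h]; ring
  have e2 : circleMean (fun z => G z + H z) = circleMean G + circleMean H := by
    have h := circleMean_sub hs hH.1
    rw [e] at h; rw [h]; ring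
  simp only [e1, e2]
  exact hG.2.add hH.2

lemma meanConverges_pow (hb : ∀ᵐ z ∂μ, ‖z‖ ≤ 1) (hON : OrthonormalPolys μ p κ)
    (hF : ∀ i, Tendsto (fun n => defect κ (n + i)) F (𝓝 0)) (m : ℕ) :
    MeanConverges μ p F (fun z => z ^ m) := by
  refine ⟨by fun_prop, ?_⟩
  have e : ∀ n, sqMean μ (p n) (fun z => z ^ m) = polyInner μ (p n) (X ^ m * p n) := fun n => by
    unfold sqMean polyInner
    congr 1; ext z
    simp only [eval_mul, eval_pow, eval_X]
    push_cast
    rw [← Complex.conj_mul']; ring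
  simp only [e]
  rcases eq_or_ne m 0 with rfl | hm
  · simp only [pow_zero, one_mul, circleMean_const, polyInner_self, polyNormSq_p hON,
      Complex.ofReal_one]
    exact tendsto_const_nhds
  · rw [circleMean_pow hm, tendsto_zero_iff_norm_tendsto_zero]
    have hlim := (tendsto_polyNormSq_shift hb hON hF m).sqrt
    rw [Real.sqrt_zero] at hlim
    refine squeeze_zero (fun _ => norm_nonneg _) (fun n => ?_) hlim
    have h0 : polyInner μ (p n) (p (n + m)) = 0 := by
      unfold polyInner
      rw [hON.2.2.2, if_neg (by omega)]
    have h := norm_polyInner_le hb (p n) (X ^ m * p n - p (n + m))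
    rwa [polyInner_sub hb, h0, sub_zero, polyNormSq_p hON, Real.sqrt_one, one_mul] at h

/-- The measures `|p n|² dμ` concentrate on the unit circle. -/
lemma integral_one_sub_normSq_le (hb : ∀ᵐ z ∂μ, ‖z‖ ≤ 1) (hON : OrthonormalPolys μ p κ) (n : ℕ) :
    ∫ z, (1 - ‖z‖ ^ 2) * ‖(p n).eval z‖ ^ 2 ∂μ ≤ 2 * defect κ n := by
  have e : ∫ z, (1 - ‖z‖ ^ 2) * ‖(p n).eval z‖ ^ 2 ∂μ =
      polyNormSq μ (p n) - polyNormSq μ (X * p n) := by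
    unfold polyNormSq
    rw [← integral_sub (integrable_of_continuous hb (by fun_prop))
      (integrable_of_continuous hb (by fun_prop))]
    congr 1; ext z
    simp only [eval_mul, eval_X, norm_mul]
    ring
  have h1 := polyNormSq_X_mul_sub hb hON n
  have h2 := polyNormSq_nonneg (μ := μ) (X * p n - p (n + 1))
  rw [e, polyNormSq_p hON]
  linarith

lemma meanConverges_pow_mul_conj_pow (hb : ∀ᵐ z ∂μ, ‖z‖ ≤ 1) (hON : OrthonormalPolys μ p κ)
    (hF : ∀ i, Tendsto (fun n => defect κ (n + i)) F (𝓝 0)) (k l : ℕ) :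
    MeanConverges μ p F (fun z => z ^ k * (starRingEnd ℂ) z ^ l) := by
  wlog hkl : l ≤ k generalizing k l
  · convert (this l k (by omega)).conj using 2 with z
    simp [mul_comm]
  obtain ⟨m, rfl⟩ := Nat.exists_eq_add_of_le' hkl
  have hpow := meanConverges_pow hb hON hF m
  have hc : Continuous (fun z : ℂ => z ^ (m + l) * (starRingEnd ℂ) z ^ l) := by fun_prop
  have e : ∀ z : ℂ, z ^ (m + l) * (starRingEnd ℂ) z ^ l = z ^ m * ((‖z‖ ^ 2) ^ l : ℝ) := fun z => by
    rw [pow_add, mul_assoc, ← mul_pow, Complex.mul_conj']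
    push_cast; rfl
  refine ⟨hc, ?_⟩
  rw [circleMean_congr (H := fun z => z ^ m) fun z hz => by rw [e, hz]; simp]
  have hdiff : Tendsto (fun n => sqMean μ (p n) (fun z => z ^ (m + l) * (starRingEnd ℂ) z ^ l)
      - sqMean μ (p n) (fun z => z ^ m)) F (𝓝 0) := by
    have hlim : Tendsto (fun n => (l : ℝ) * (2 * defect κ n)) F (𝓝 0) := by
      simpa using ((hF 0).const_mul 2).const_mul (l : ℝ)
    refine squeeze_zero_norm (fun n => ?_) hlim
    rw [← sqMean_sub hb (p n) hc hpow.1]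
    refine (norm_sqMean_le hb (p n) (φ := fun z => l * (1 - ‖z‖ ^ 2)) (by fun_prop)
      fun z hz => ?_).trans ?_
    · have h1 : ‖z‖ ^ 2 ≤ 1 := pow_le_one₀ (norm_nonneg _) hz
      -- The Bernoulli inequality bounds `1 - |z|^(2l)` by `l (1 - |z|²)`.
      have h2 := one_add_mul_le_pow (a := ‖z‖ ^ 2 - 1) (by nlinarith [norm_nonneg z]) l
      have h3 : (‖z‖ ^ 2) ^ l ≤ 1 := pow_le_one₀ (by positivity) h1
      have h4 : ‖z‖ ^ m ≤ 1 := pow_le_one₀ (norm_nonneg _) hz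
      rw [add_sub_cancel] at h2
      have e' : ((fun z : ℂ => z ^ (m + l) * (starRingEnd ℂ) z ^ l : ℂ → ℂ) -
          (fun z => z ^ m : ℂ → ℂ)) z =
          z ^ m * (((‖z‖ ^ 2) ^ l - 1 : ℝ) : ℂ) := by
        simp only [Pi.sub_apply, e]; push_cast; ring
      rw [e', norm_mul, norm_pow, Complex.norm_real, Real.norm_of_nonpos (by linarith)]
      have h5 := mul_le_of_le_one_left (by linarith : 0 ≤ -((‖z‖ ^ 2) ^ l - 1)) h4
      linarith
    · simp only [mul_assoc]
      rw [integral_const_mul]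
      exact mul_le_mul_of_nonneg_left (integral_one_sub_normSq_le hb hON n) (by positivity)
  simpa using hdiff.add hpow.2

/-- Stone–Weierstrass on the closed disk passes from the monomials `z ^ k * conj z ^ l` to all
continuous functions. -/
lemma meanConverges_of_continuous (hb : ∀ᵐ z ∂μ, ‖z‖ ≤ 1) (hON : OrthonormalPolys μ p κ)
    (hF : ∀ i, Tendsto (fun n => defect κ (n + i)) F (𝓝 0)) {f : ℂ → ℂ} (hf : Continuous f) :
    MeanConverges μ p F f := by
  let D : Set ℂ := Metric.closedBall 0 1
  have : CompactSpace D := isCompact_iff_compactSpace.1 (isCompact_closedBall _ _)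
  have hspan : ∀ g ∈ (polynomialFunctions D).starClosure,
      ∃ G : ℂ → ℂ, MeanConverges μ p F G ∧ ∀ z : D, G z = g z := by
    intro g hg
    rw [polynomialFunctions.starClosure_eq_adjoin_X, ← StarSubalgebra.mem_toSubalgebra,
      StarAlgebra.adjoin_toSubalgebra, ← Subalgebra.mem_toSubmodule, Algebra.adjoin_eq_span,
      Set.star_singleton, Set.singleton_union] at hg
    induction hg using Submodule.span_induction with
    | mem g hg =>
      obtain ⟨k, l, rfl⟩ := (Submonoid.mem_closure_pair _ _ _).1 hg
      refine ⟨_, meanConverges_pow_mul_conj_pow hb hON hF k l, fun z => ?_⟩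
      simp
    | zero =>
      refine ⟨fun z => 0 * z ^ 0, (meanConverges_pow hb hON hF 0).smul 0, fun z => by simp⟩
    | add g h _ _ hg hh =>
      obtain ⟨G, hG, hGg⟩ := hg
      obtain ⟨H, hH, hHh⟩ := hh
      exact ⟨_, hG.add hb hH, fun z => by simp [hGg, hHh]⟩
    | smul c g _ hg =>
      obtain ⟨G, hG, hGg⟩ := hg
      exact ⟨_, hG.smul c, fun z => by simp [hGg]⟩
  refine ⟨hf, Metric.tendsto_nhds.2 fun ε hε => ?_⟩
  let f' : C(D, ℂ) := ⟨fun z => f z, by fun_prop⟩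
  have hmem : f' ∈ (polynomialFunctions D).starClosure.topologicalClosure := by
    rw [polynomialFunctions.starClosure_topologicalClosure]; trivial
  rw [← SetLike.mem_coe, StarSubalgebra.topologicalClosure_coe, Metric.mem_closure_iff] at hmem
  obtain ⟨g, hg, hfg⟩ := hmem (ε / 3) (by positivity)
  obtain ⟨G, hG, hGg⟩ := hspan g hg
  have hclose : ∀ z, ‖z‖ ≤ 1 → ‖(f - G) z‖ ≤ ε / 3 := fun z hz => by
    have h := (ContinuousMap.dist_apply_le_dist (f := f') (g := g)
      ⟨z, by simpa [D] using hz⟩).trans hfg.le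
    rw [dist_eq_norm, ← hGg] at h
    exact h
  filter_upwards [Metric.tendsto_nhds.1 hG.2 (ε / 3) (by positivity)] with n hn
  have h1 : ‖sqMean μ (p n) f - sqMean μ (p n) G‖ ≤ ε / 3 := by
    rw [← sqMean_sub hb (p n) hf hG.1]
    have h := norm_sqMean_le hb (p n) (φ := fun _ => ε / 3) continuous_const hclose
    have e : ∫ z, ‖(p n).eval z‖ ^ 2 ∂μ = 1 := polyNormSq_p hON n
    rwa [integral_const_mul, e, mul_one] at h
  have h2 : ‖circleMean f - circleMean G‖ ≤ ε / 3 := by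
    rw [← circleMean_sub hf hG.1]
    exact norm_circleMean_le fun z hz => hclose z hz.le
  rw [← dist_eq_norm] at h1 h2
  rw [dist_comm] at h2
  have := dist_triangle4 (sqMean μ (p n) f) (sqMean μ (p n) G) (circleMean G) (circleMean f)
  linarith

end Moments

theorem regular_disk_weak_convergence_to_arclength
    (μ : Measure ℂ) [IsFiniteMeasure μ]
    (hc : IsCompact (measSupport μ)) (hi : (measSupport μ).Infinite)
    (hD : measSupport μ ⊆ Metric.closedBall (0 : ℂ) 1)
    (hcirc : Metric.sphere (0 : ℂ) 1 ⊆ measSupport μ)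
    (p : ℕ → Polynomial ℂ) (κ : ℕ → ℝ) (hON : OrthonormalPolys μ p κ)
    (hreg : Tendsto (fun n : ℕ => (κ n) ^ ((n : ℝ)⁻¹)) atTop (𝓝 1)) :
    ∃ 𝒩 : Set ℕ, hasDensityOne 𝒩 ∧
      ∀ f : BoundedContinuousFunction ℂ ℂ,
        Tendsto (fun n => ∫ z, f z * ((‖(p n).eval z‖ ^ 2 : ℝ) : ℂ) ∂μ) (atTop ⊓ 𝓟 𝒩)
          (𝓝 ((∫ θ in (0 : ℝ)..(2 * Real.pi), f (Complex.exp (θ * Complex.I))) /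
                ((2 * Real.pi : ℝ) : ℂ))) := by
  have hb := ae_norm_le_one μ hD
  obtain ⟨𝒩, hdens, hF⟩ := exists_density_one_tendsto (defect κ) (defect_nonneg hb hON)
    (defect_le_one hON) (tendsto_defect_average hON.2.1 (defect_nonneg hb hON) hreg)
  exact ⟨𝒩, hdens, fun f => (meanConverges_of_continuous hb hON hF f.continuous).2⟩
end
end

section
/- Fix m ∈ ℕ, m ≥ 1, and let E_m = {z ∈ ℂ : |z^m − 1| ≤ 1}. Let μ be a finite positive Borel measure that is regular on E_m, i.e. supp(μ) ⊆ E_m, the boundary {z : |z^m − 1| = 1} is contained in supp(μ), and κ_n^{1/n} → 1 as n → ∞. Then there exists a set 𝒩 ⊆ ℕ of asymptotic density 1 such that (z^m − 1) p_{n−m}(z;μ) / p_n(z;μ) → 1 as n → ∞ through 𝒩, for every z ∉ ch(μ). -/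
/-!
Write `w = z ^ m - 1`, so that `|w| ≤ 1` on the support of `μ`. In `L²(μ)` the polynomial
`w p_{n-m}` has norm at most one, and since its leading coefficient is `κ_{n-m}`, its inner product
with the unit vector `p_n` equals `κ_{n-m} / κ_n`. Expanding the square gives
`‖w p_{n-m} - p_n‖² ≤ 2 (1 - κ_{n-m} / κ_n)` (`integral_normSq_sub_le`); in particular
`κ_{n-m} ≤ κ_n`.

The right-hand side is at most twice the increment `log κ_n - log κ_{n-m} ≥ 0`. These increments
telescope, and regularity says `log κ_n = o(n)`, so their averages tend to zero
(`tendsto_sum_increments`). By the Koopman–von Neumann lemma (`exists_density_one_tendsto_zero`) the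
increments themselves tend to zero along a set of density one.

It remains to pass from `L²` norms to values at a point `z` outside the convex hull of the support.
If `deg Q ≤ n`, then `(Q(x) p_n(z) - Q(z) p_n(x)) / (x - z)` is a polynomial in `x` of degree less
than `n`, hence orthogonal to `p_n`, so that
`Q(z) ∫ |p_n|² / (x - z) dμ = p_n(z) ∫ conj(p_n) Q / (x - z) dμ` (`eval_mul_integral_eq`).
The second integral is `O(‖Q‖)`, while the first stays away from zero because the values
`1 / (x - z)` lie in an open half-plane bounded away from the origin (`exists_separation`). Hence
`|Q(z) / p_n(z)| ≤ C(z) ‖Q‖` (`exists_norm_eval_le`), which is applied to `Q = w p_{n-m} - p_n`.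
-/


open MeasureTheory Filter Topology Polynomial

noncomputable section

/-! ### Density-one subsequences -/

/-- The Koopman–von Neumann lemma: a nonnegative sequence whose partial sums are `o(n)` tends to
zero along a set of asymptotic density one. -/
lemma exists_density_one_tendsto_zero (a : ℕ → ℝ) (ha : ∀ n, 0 ≤ a n)
    (h : Tendsto (fun N : ℕ => (∑ j ∈ Finset.range (N + 1), a j) / N) atTop (𝓝 0)) :
    ∃ S : Set ℕ, hasDensityOne S ∧ Tendsto a (atTop ⊓ 𝓟 S) (𝓝 0) := by
  classical
  -- `d n` is an antitone positive majorant of the averages, still tending to zero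
  set v : ℕ → ℝ := fun N => (∑ j ∈ Finset.range (N + 1), a j) / N with hv
  have hv0 : ∀ N, 0 ≤ v N := fun N =>
    div_nonneg (Finset.sum_nonneg fun j _ => ha j) (Nat.cast_nonneg _)
  obtain ⟨B, hB⟩ := h.bddAbove_range
  have hbdd : ∀ n, BddAbove (Set.range fun k => v (n + k)) := fun n =>
    ⟨B, by rintro _ ⟨k, rfl⟩; exact hB ⟨n + k, rfl⟩⟩
  set d : ℕ → ℝ := fun n => (⨆ k, v (n + k)) + 1 / ((n : ℝ) + 1) with hd
  have hvd : ∀ n, v n ≤ d n := fun n => by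
    have h1 : v (n + 0) ≤ ⨆ k, v (n + k) := le_ciSup (hbdd n) 0
    have : (0 : ℝ) < 1 / ((n : ℝ) + 1) := by positivity
    simp only [hd]; simp only [add_zero] at h1; linarith
  have hdpos : ∀ n, 0 < d n := fun n => by
    have h1 : v (n + 0) ≤ ⨆ k, v (n + k) := le_ciSup (hbdd n) 0
    have : (0 : ℝ) < 1 / ((n : ℝ) + 1) := by positivity
    have := hv0 (n + 0)
    simp only [hd]; linarith
  have hanti : ∀ n N, n ≤ N → d N ≤ d n := by
    intro n N hnN
    have h1 : (⨆ k, v (N + k)) ≤ ⨆ k, v (n + k) := by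
      refine ciSup_le fun k => ?_
      have := le_ciSup (hbdd n) (N - n + k)
      rwa [show n + (N - n + k) = N + k by omega] at this
    have h2 : 1 / ((N : ℝ) + 1) ≤ 1 / ((n : ℝ) + 1) := by
      gcongr
    simp only [hd]; linarith
  have hdlim : Tendsto d atTop (𝓝 0) := by
    have h1 : Tendsto (fun n => ⨆ k, v (n + k)) atTop (𝓝 0) := by
      rw [Metric.tendsto_atTop] at h ⊢
      intro ε hε
      obtain ⟨N, hN⟩ := h (ε / 2) (by linarith)
      refine ⟨N, fun n hn => ?_⟩
      have hle : (⨆ k, v (n + k)) ≤ ε / 2 := by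
        refine ciSup_le fun k => ?_
        have := hN (n + k) (by omega)
        rw [Real.dist_eq, sub_zero] at this
        exact (le_abs_self _).trans this.le
      have hge : 0 ≤ ⨆ k, v (n + k) := (hv0 (n + 0)).trans (le_ciSup (hbdd n) 0)
      rw [Real.dist_eq, sub_zero, abs_of_nonneg hge]
      linarith
    simpa only [add_zero] using h1.add (tendsto_one_div_add_atTop_nhds_zero_nat (𝕜 := ℝ))
  have hsqrt : Tendsto (fun n => √(d n)) atTop (𝓝 0) := by
    have h1 := (Real.continuous_sqrt.tendsto 0).comp hdlim
    rwa [Real.sqrt_zero] at h1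
  refine ⟨{n | a n ≤ √(d n)}, ?_, ?_⟩
  · -- by Markov's inequality the exceptional set has at most `N * √(d N)` elements up to `N`
    have hcount : ∀ N : ℕ, 1 ≤ N →
        1 - √(d N) ≤ (Nat.card ↥({n | a n ≤ √(d n)} ∩ Set.Icc 1 N) : ℝ) / N ∧
        (Nat.card ↥({n | a n ≤ √(d n)} ∩ Set.Icc 1 N) : ℝ) / N ≤ 1 := by
      intro N hN
      have hNpos : (0 : ℝ) < N := by exact_mod_cast hN
      have hcard : Nat.card ↥({n | a n ≤ √(d n)} ∩ Set.Icc 1 N)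
          = ((Finset.Icc 1 N).filter fun n => a n ≤ √(d n)).card := by
        rw [← Set.ncard_coe_finset, ← Nat.card_coe_set_eq]
        congr 2
        ext n
        simp [and_comm]
      have hsplit := Finset.card_filter_add_card_filter_not (s := Finset.Icc 1 N)
        (fun n => a n ≤ √(d n))
      rw [Nat.card_Icc, Nat.add_sub_cancel] at hsplit
      set G := ((Finset.Icc 1 N).filter fun n => a n ≤ √(d n)).card
      set Bd := ((Finset.Icc 1 N).filter fun n => ¬ a n ≤ √(d n)) with hBd
      have hs : 0 < √(d N) := Real.sqrt_pos.2 (hdpos N)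
      have hsum : (Bd.card : ℝ) * √(d N) ≤ N * d N := by
        calc (Bd.card : ℝ) * √(d N) = ∑ n ∈ Bd, √(d N) := by simp
          _ ≤ ∑ n ∈ Bd, a n := by
              refine Finset.sum_le_sum fun n hn => ?_
              rw [hBd, Finset.mem_filter, Finset.mem_Icc] at hn
              exact (Real.sqrt_le_sqrt (hanti n N hn.1.2)).trans (not_le.1 hn.2).le
          _ ≤ ∑ n ∈ Finset.range (N + 1), a n := by
              refine Finset.sum_le_sum_of_subset_of_nonneg ?_ fun n _ _ => ha n
              intro n hn
              rw [hBd, Finset.mem_filter, Finset.mem_Icc] at hn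
              exact Finset.mem_range.2 (by omega)
          _ = N * v N := by simp only [hv]; field_simp
          _ ≤ N * d N := by gcongr; exact hvd N
      have hsum' : (Bd.card : ℝ) ≤ N * √(d N) := by
        have : (Bd.card : ℝ) * √(d N) ≤ (N * √(d N)) * √(d N) := by
          rw [mul_assoc, Real.mul_self_sqrt (hdpos N).le]; exact hsum
        exact le_of_mul_le_mul_right this hs
      have hsplit' : (G : ℝ) + Bd.card = N := by exact_mod_cast hsplit
      rw [hcard]
      constructor
      · rw [le_div_iff₀ hNpos]; linarith
      · rw [div_le_one hNpos]
        have : (0 : ℝ) ≤ Bd.card := Nat.cast_nonneg _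
        linarith
    refine tendsto_of_tendsto_of_tendsto_of_le_of_le'
      (g := fun N => 1 - √(d N)) (h := fun _ => 1) ?_ tendsto_const_nhds ?_ ?_
    · simpa using tendsto_const_nhds.sub hsqrt
    · filter_upwards [eventually_ge_atTop 1] with N hN using (hcount N hN).1
    · filter_upwards [eventually_ge_atTop 1] with N hN using (hcount N hN).2
  · refine tendsto_of_tendsto_of_tendsto_of_le_of_le' tendsto_const_nhds
      (hsqrt.mono_left inf_le_left) (Eventually.of_forall ha) ?_
    exact eventually_inf_principal.2 (Eventually.of_forall fun n hn => hn)

/-- If `L n = o(n)`, then so are the telescoping partial sums of the `m`-step increments of `L`. -/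
lemma tendsto_sum_increments (m : ℕ) (L : ℕ → ℝ)
    (hL : Tendsto (fun n : ℕ => L n / n) atTop (𝓝 0)) :
    Tendsto (fun N : ℕ => (∑ j ∈ Finset.range (N + 1),
      if m ≤ j then L j - L (j - m) else 0) / N) atTop (𝓝 0) := by
  have htel : ∀ M, (∑ j ∈ Finset.range (M + m), if m ≤ j then L j - L (j - m) else 0)
      = ∑ i ∈ Finset.range m, (L (M + i) - L i) := by
    intro M
    induction M with
    | zero =>
      simp only [zero_add, sub_self, Finset.sum_const_zero]
      refine Finset.sum_eq_zero fun j hj => ?_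
      rw [if_neg (by simpa using hj)]
    | succ M ih =>
      rw [show M + 1 + m = (M + m) + 1 by omega, Finset.sum_range_succ, ih]
      have h1 := Finset.sum_range_succ (fun i => L (M + i)) m
      rw [Finset.sum_range_succ' (fun i => L (M + i)) m] at h1
      simp only [Finset.sum_sub_distrib]
      rw [if_pos (by omega), Nat.add_sub_cancel]
      simp only [add_zero] at h1
      have : ∀ i, M + 1 + i = M + (i + 1) := fun i => by omega
      simp only [this]
      linarith
  rw [← tendsto_add_atTop_iff_nat m]
  have heq : ∀ M, (∑ j ∈ Finset.range (M + m + 1),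
      if m ≤ j then L j - L (j - m) else 0) / ((M + m : ℕ) : ℝ)
      = ∑ i ∈ Finset.range m, (L (M + 1 + i) / ((M + m : ℕ) : ℝ) - L i / ((M + m : ℕ) : ℝ)) := by
    intro M
    rw [show M + m + 1 = (M + 1) + m by omega, htel, Finset.sum_div]
    simp only [sub_div]
  simp only [heq]
  rw [show (0 : ℝ) = ∑ i ∈ Finset.range m, ((0 : ℝ) - 0) by simp]
  refine tendsto_finsetSum _ fun i hi => Tendsto.sub ?_ ?_
  · have h1 : Tendsto (fun M : ℕ => |L (M + (1 + i)) / ((M + (1 + i) : ℕ) : ℝ)|) atTop (𝓝 0) := by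
      simpa using ((tendsto_add_atTop_iff_nat (1 + i)).2 hL).abs
    refine squeeze_zero_norm (fun M => ?_) h1
    rw [Real.norm_eq_abs, abs_div, abs_div, Nat.abs_cast, Nat.abs_cast, ← add_assoc]
    have hi' := Finset.mem_range.1 hi
    refine div_le_div_of_nonneg_left (abs_nonneg _) ?_ ?_
    · exact_mod_cast (by omega : 0 < M + 1 + i)
    · exact_mod_cast (by omega : M + 1 + i ≤ M + m)
  · exact tendsto_const_nhds.div_atTop
      (tendsto_natCast_atTop_atTop.comp (tendsto_add_atTop_nat m))

/-! ### Compactness of convex hulls in the plane and strict separation -/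

/-- By Carathéodory's theorem the convex hull is a finite union of images of the compact sets
`stdSimplex ℝ (Fin k) × K ^ k`. -/
lemma isCompact_convexHull_complex {K : Set ℂ} (hK : IsCompact K) :
    IsCompact (convexHull ℝ K) := by
  have hEq : convexHull ℝ K = ⋃ k ∈ Finset.range 4,
      (fun q : (Fin k → ℝ) × (Fin k → ℂ) => ∑ i, q.1 i • q.2 i) ''
        (stdSimplex ℝ (Fin k) ×ˢ Set.pi Set.univ fun _ => K) := by
    ext x
    simp only [Set.mem_iUnion, Set.mem_image, Set.mem_prod, Prod.exists]
    constructor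
    · intro hx
      obtain ⟨ι, hι, z, w, hz, hind, hw, hw1, hx⟩ := eq_pos_convex_span_of_mem_convexHull hx
      have hcard : Fintype.card ι ≤ 3 := by
        have h1 := hind.card_le_finrank_succ
        have h2 := Submodule.finrank_le (vectorSpan ℝ (Set.range z))
        rw [Complex.finrank_real_complex] at h2
        omega
      let e := Fintype.equivFin ι
      refine ⟨Fintype.card ι, Finset.mem_range.2 (by omega), w ∘ e.symm, z ∘ e.symm, ⟨⟨?_, ?_⟩, ?_⟩,
        ?_⟩
      · exact fun i => (hw _).le
      · rw [← hw1]; exact Equiv.sum_comp e.symm w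
      · exact fun i _ => hz ⟨_, rfl⟩
      · rw [← hx]; exact Equiv.sum_comp e.symm fun i => w i • z i
    · rintro ⟨k, _, w, z, ⟨⟨hw, hw1⟩, hz⟩, rfl⟩
      exact (convex_convexHull ℝ K).sum_mem (fun i _ => hw i) hw1
        fun i _ => subset_convexHull ℝ K (hz i (Set.mem_univ i))
  rw [hEq]
  refine (Finset.range 4).isCompact_biUnion fun k _ => ?_
  refine ((isCompact_stdSimplex ℝ (Fin k)).prod (isCompact_univ_pi fun _ => hK)).image ?_
  fun_prop

/-- For `z` outside the convex hull of `K`, the values `1 / (x - z)`, `x ∈ K`, lie in a fixed open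
half-plane, bounded away from the origin. -/
lemma exists_separation {K : Set ℂ} (hK : IsCompact K) {z : ℂ} (hz : z ∉ convexHull ℝ K) :
    ∃ (a : ℂ) (δ D : ℝ), 0 < δ ∧ 0 < D ∧
      ∀ x ∈ K, x ≠ z ∧ δ ≤ (a * (x - z)⁻¹).re ∧ ‖(x - z)⁻¹‖ ≤ D := by
  obtain ⟨f, u, hfz, hf⟩ := geometric_hahn_banach_point_closed (convex_convexHull ℝ K)
    (isCompact_convexHull_complex hK).isClosed hz
  have hrep : ∀ v : ℂ, f v = v.re * f 1 + v.im * f Complex.I := by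
    intro v
    conv_lhs => rw [← Complex.re_add_im v]
    rw [map_add, show (v.re : ℂ) = v.re • (1 : ℂ) by simp,
      show (v.im : ℂ) * Complex.I = v.im • Complex.I by simp, map_smul, map_smul]
    simp
  set s := u - f z with hs
  have hspos : 0 < s := by linarith
  have hsx : ∀ x ∈ K, s ≤ f (x - z) := fun x hx => by
    rw [map_sub]; linarith [hf x (subset_convexHull ℝ K hx)]
  have hcont : ContinuousOn (fun x => (x - z)⁻¹) K := by
    refine ContinuousOn.inv₀ (by fun_prop) fun x hx h0 => ?_
    have := hsx x hx
    rw [h0, map_zero] at this; linarith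
  obtain ⟨R, hR⟩ := hK.exists_bound_of_continuousOn (f := fun x => x - z) (by fun_prop)
  obtain ⟨D, hD⟩ := hK.exists_bound_of_continuousOn hcont
  refine ⟨⟨f 1, f Complex.I⟩, s / (|R| + 1) ^ 2, |D| + 1, by positivity, by positivity,
    fun x hx => ⟨?_, ?_, ?_⟩⟩
  · rintro rfl
    have := hsx x hx
    rw [sub_self, map_zero] at this; linarith
  · have hne : x - z ≠ 0 := by
      intro h0
      have := hsx x hx
      rw [h0, map_zero] at this; linarith
    have h1 : ((⟨f 1, f Complex.I⟩ : ℂ) * (x - z)⁻¹).re = f (x - z) / Complex.normSq (x - z) := by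
      rw [hrep (x - z), Complex.mul_re, Complex.inv_re, Complex.inv_im]
      ring
    rw [h1, Complex.normSq_eq_norm_sq]
    have hn : 0 < ‖x - z‖ := norm_pos_iff.2 hne
    have : ‖x - z‖ ≤ |R| + 1 := (hR x hx).trans ((le_abs_self R).trans (by linarith))
    have h2 := hsx x hx
    have h3 : 0 ≤ f (x - z) := hspos.le.trans h2
    gcongr
  · exact (hD x hx).trans ((le_abs_self D).trans (by linarith))

/-! ### Integrals against the measure -/

lemma measure_compl_measSupport (μ : Measure ℂ) : μ (measSupport μ)ᶜ = 0 := by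
  refine measure_null_of_locally_null _ fun x hx => ?_
  simp only [measSupport, Set.mem_compl_iff, Set.mem_ofPred_eq, not_forall, not_not] at hx
  obtain ⟨U, hU, h0⟩ := hx
  exact ⟨U, mem_nhdsWithin_of_mem_nhds hU, h0⟩

lemma ae_mem_of_compl {μ : Measure ℂ} {K : Set ℂ} (hμK : μ Kᶜ = 0) : ∀ᵐ x ∂μ, x ∈ K :=
  mem_ae_iff.2 hμK

lemma integrable_of_continuousOn {μ : Measure ℂ} [IsFiniteMeasure μ] {K : Set ℂ}
    (hK : IsCompact K) (hμK : μ Kᶜ = 0) {E : Type*} [NormedAddCommGroup E]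
    [SecondCountableTopologyEither ℂ E] {f : ℂ → E}
    (hf : ContinuousOn f K) : Integrable f μ := by
  have h := hf.integrableOn_compact (μ := μ) hK
  rwa [IntegrableOn, Measure.restrict_eq_self_of_ae_mem (ae_mem_of_compl hμK)] at h

lemma integrable_of_continuous_s11 {μ : Measure ℂ} [IsFiniteMeasure μ] {K : Set ℂ}
    (hK : IsCompact K) (hμK : μ Kᶜ = 0) {E : Type*} [NormedAddCommGroup E]
    [SecondCountableTopologyEither ℂ E] {f : ℂ → E}
    (hf : Continuous f) : Integrable f μ :=
  integrable_of_continuousOn hK hμK hf.continuousOn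

/-! ### Orthonormal polynomials -/

lemma integral_normSq_eq_one {μ : Measure ℂ} {p : ℕ → Polynomial ℂ} {κ : ℕ → ℝ}
    (hON : OrthonormalPolys μ p κ) (n : ℕ) :
    ∫ x, ‖(p n).eval x‖ ^ 2 ∂μ = 1 := by
  have h := hON.2.2.2 n n
  simp only [Complex.conj_mul', if_true] at h
  have h2 : ∫ x, (((‖(p n).eval x‖ ^ 2 : ℝ)) : ℂ) ∂μ = 1 := by simpa using h
  rw [integral_complex_ofReal] at h2
  exact_mod_cast h2

section OrthonormalPolynomials

variable {μ : Measure ℂ} [IsFiniteMeasure μ] {K : Set ℂ} {p : ℕ → Polynomial ℂ} {κ : ℕ → ℝ}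

lemma integral_conj_mul_of_degree_lt (hK : IsCompact K) (hμK : μ Kᶜ = 0)
    (hON : OrthonormalPolys μ p κ) (n : ℕ) (q : Polynomial ℂ) (hq : q.degree < n) :
    ∫ x, (starRingEnd ℂ) ((p n).eval x) * q.eval x ∂μ = 0 := by
  have hmain : ∀ k ≤ n, ∀ q : Polynomial ℂ, q.degree < k →
      ∫ x, (starRingEnd ℂ) ((p n).eval x) * q.eval x ∂μ = 0 := by
    intro k
    induction k with
    | zero =>
      intro _ q hq
      have : q = 0 := by simpa [Polynomial.degree_lt_iff_coeff_zero, Polynomial.ext_iff] using hq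
      simp [this]
    | succ k ih =>
      intro hk q hq
      have hκ : (κ k : ℂ) ≠ 0 := by exact_mod_cast (hON.2.1 k).ne'
      have hcoef : (p k).coeff k = κ k := by
        rw [← hON.2.2.1 k, Polynomial.leadingCoeff, Polynomial.natDegree_eq_of_degree_eq_some
          (hON.1 k)]
      set c : ℂ := q.coeff k / κ k with hc
      -- subtracting a multiple of `p k` lowers the degree
      have hdeg : (q - Polynomial.C c * p k).degree < k := by
        rw [Polynomial.degree_lt_iff_coeff_zero] at hq ⊢
        intro j hj
        rw [Polynomial.coeff_sub, Polynomial.coeff_C_mul]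
        rcases hj.eq_or_lt with rfl | hj
        · rw [hcoef, hc]; field_simp; ring
        · rw [hq j hj, Polynomial.coeff_eq_zero_of_degree_lt
            (by rw [hON.1 k]; exact_mod_cast hj)]
          simp
      have h1 := ih (by omega) _ hdeg
      have h2 : ∀ x, (starRingEnd ℂ) ((p n).eval x) * q.eval x
          = (starRingEnd ℂ) ((p n).eval x) * (q - Polynomial.C c * p k).eval x
            + c * ((starRingEnd ℂ) ((p n).eval x) * (p k).eval x) := by
        intro x
        simp only [Polynomial.eval_sub, Polynomial.eval_mul, Polynomial.eval_C]; ring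
      simp only [h2]
      rw [integral_add (integrable_of_continuous_s11 hK hμK (by fun_prop))
        (integrable_of_continuous_s11 hK hμK (by fun_prop)), h1, integral_const_mul,
        hON.2.2.2 n k, if_neg (by omega)]
      simp
  exact hmain n le_rfl q hq

/-- Cauchy–Schwarz against the unit vector `p n`, in the form of nonnegativity of
`∫ (‖Q‖ - I ‖p n‖)²` with `I = ∫ ‖p n‖ ‖Q‖`. -/
lemma integral_norm_mul_norm_le (hK : IsCompact K) (hμK : μ Kᶜ = 0)
    (hON : OrthonormalPolys μ p κ) (n : ℕ) (Q : Polynomial ℂ) :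
    ∫ x, ‖(p n).eval x‖ * ‖Q.eval x‖ ∂μ ≤ √(∫ x, ‖Q.eval x‖ ^ 2 ∂μ) := by
  set I := ∫ x, ‖(p n).eval x‖ * ‖Q.eval x‖ ∂μ with hI
  have h0 : 0 ≤ ∫ x, (‖Q.eval x‖ - I * ‖(p n).eval x‖) ^ 2 ∂μ :=
    integral_nonneg fun x => sq_nonneg _
  have h1 : ∀ x, (‖Q.eval x‖ - I * ‖(p n).eval x‖) ^ 2
      = ‖Q.eval x‖ ^ 2 - 2 * I * (‖(p n).eval x‖ * ‖Q.eval x‖) + I ^ 2 * ‖(p n).eval x‖ ^ 2 :=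
    fun x => by ring
  simp only [h1] at h0
  rw [integral_add (integrable_of_continuous_s11 hK hμK (by fun_prop))
      (integrable_of_continuous_s11 hK hμK (by fun_prop)),
    integral_sub (integrable_of_continuous_s11 hK hμK (by fun_prop))
      (integrable_of_continuous_s11 hK hμK (by fun_prop)),
    integral_const_mul, integral_const_mul, integral_normSq_eq_one hON, ← hI] at h0
  exact Real.le_sqrt_of_sq_le (by nlinarith)

/-- The polynomial `x ↦ (Q(x) p_n(z) - Q(z) p_n(x)) / (x - z)` has degree less than `n`, hence is
orthogonal to `p_n`. -/
lemma eval_mul_integral_eq (hK : IsCompact K) (hμK : μ Kᶜ = 0)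
    (hON : OrthonormalPolys μ p κ) (n : ℕ) (Q : Polynomial ℂ) (hQ : Q.degree ≤ n)
    (z : ℂ) (hz : ∀ x ∈ K, x ≠ z) :
    Q.eval z * ∫ x, (‖(p n).eval x‖ ^ 2 : ℂ) * (x - z)⁻¹ ∂μ
      = (p n).eval z * ∫ x, (starRingEnd ℂ) ((p n).eval x) * Q.eval x * (x - z)⁻¹ ∂μ := by
  have hinv : ContinuousOn (fun x => (x - z)⁻¹) K :=
    ContinuousOn.inv₀ (by fun_prop) fun x hx => sub_ne_zero.2 (hz x hx)
  set T := Q * Polynomial.C ((p n).eval z) - Polynomial.C (Q.eval z) * p n with hT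
  obtain ⟨R, hR⟩ : (Polynomial.X - Polynomial.C z) ∣ T := by
    rw [Polynomial.dvd_iff_isRoot]
    simp [hT, Polynomial.IsRoot.def]
  have hTdeg : T.degree ≤ n := by
    refine (Polynomial.degree_sub_le _ _).trans (max_le ?_ ?_)
    · rw [mul_comm, ← Polynomial.smul_eq_C_mul]; exact (Polynomial.degree_smul_le _ _).trans hQ
    · rw [← Polynomial.smul_eq_C_mul]; exact (Polynomial.degree_smul_le _ _).trans (hON.1 n).le
  have hRdeg : R.degree < n := by
    rw [hR, Polynomial.degree_mul, Polynomial.degree_X_sub_C] at hTdeg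
    by_cases hR0 : R = 0
    · rw [hR0, Polynomial.degree_zero]; exact WithBot.bot_lt_coe n
    · rw [Polynomial.degree_eq_natDegree hR0] at hTdeg ⊢
      norm_cast at hTdeg ⊢
      omega
  have h0 := integral_conj_mul_of_degree_lt hK hμK hON n R hRdeg
  have hae : ∀ᵐ x ∂μ, (starRingEnd ℂ) ((p n).eval x) * R.eval x
      = (p n).eval z * ((starRingEnd ℂ) ((p n).eval x) * Q.eval x * (x - z)⁻¹)
        - Q.eval z * ((‖(p n).eval x‖ ^ 2 : ℂ) * (x - z)⁻¹) := by
    filter_upwards [ae_mem_of_compl hμK] with x hx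
    have hne : x - z ≠ 0 := sub_ne_zero.2 (hz x hx)
    have hev : Q.eval x * (p n).eval z - Q.eval z * (p n).eval x = (x - z) * R.eval x := by
      have := congrArg (Polynomial.eval x) hR
      simpa [hT] using this
    rw [← Complex.conj_mul']
    field_simp
    linear_combination (-(starRingEnd ℂ) ((p n).eval x)) * hev
  rw [integral_congr_ae hae, integral_sub, integral_const_mul, integral_const_mul] at h0
  · linear_combination -h0
  · exact integrable_of_continuousOn hK hμK
      (ContinuousOn.mul (by fun_prop) (ContinuousOn.mul (by fun_prop) hinv))
  · exact integrable_of_continuousOn hK hμK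
      (ContinuousOn.mul (by fun_prop) (ContinuousOn.mul (by fun_prop) hinv))

/-- Outside the convex hull of the support, `p n` dominates every polynomial of degree at most `n`
in terms of its `L²` norm, uniformly in `n`. -/
lemma exists_norm_eval_le (hK : IsCompact K) (hμK : μ Kᶜ = 0)
    (hON : OrthonormalPolys μ p κ) (z : ℂ) (hz : z ∉ convexHull ℝ K) :
    ∃ C : ℝ, ∀ (n : ℕ) (Q : Polynomial ℂ), Q.degree ≤ n →
      ‖Q.eval z‖ ≤ C * √(∫ x, ‖Q.eval x‖ ^ 2 ∂μ) * ‖(p n).eval z‖ := by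
  obtain ⟨a, δ, D, hδ, hD, hsep⟩ := exists_separation hK hz
  have hzK : ∀ x ∈ K, x ≠ z := fun x hx => (hsep x hx).1
  have hinv : ContinuousOn (fun x => (x - z)⁻¹) K :=
    ContinuousOn.inv₀ (by fun_prop) fun x hx => sub_ne_zero.2 (hzK x hx)
  refine ⟨‖a‖ * D / δ, fun n Q hQ => ?_⟩
  have hid := eval_mul_integral_eq hK hμK hON n Q hQ z hzK
  set J := ∫ x, (‖(p n).eval x‖ ^ 2 : ℂ) * (x - z)⁻¹ ∂μ with hJ
  set I := ∫ x, (starRingEnd ℂ) ((p n).eval x) * Q.eval x * (x - z)⁻¹ ∂μ with hI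
  have hJlow : δ ≤ ‖a‖ * ‖J‖ := by
    have hint : Integrable (fun x => a * ((‖(p n).eval x‖ ^ 2 : ℂ) * (x - z)⁻¹)) μ :=
      integrable_of_continuousOn hK hμK
        (ContinuousOn.mul (by fun_prop) (ContinuousOn.mul (by fun_prop) hinv))
    calc δ = ∫ x, δ * ‖(p n).eval x‖ ^ 2 ∂μ := by
          rw [integral_const_mul, integral_normSq_eq_one hON, mul_one]
      _ ≤ ∫ x, (a * ((‖(p n).eval x‖ ^ 2 : ℂ) * (x - z)⁻¹)).re ∂μ := by
          refine integral_mono_ae (integrable_of_continuous_s11 hK hμK (by fun_prop)) hint.re ?_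
          filter_upwards [ae_mem_of_compl hμK] with x hx
          have h1 : a * ((‖(p n).eval x‖ ^ 2 : ℂ) * (x - z)⁻¹)
              = ((‖(p n).eval x‖ ^ 2 : ℝ) : ℂ) * (a * (x - z)⁻¹) := by push_cast; ring
          rw [h1, Complex.re_ofReal_mul, mul_comm]
          exact mul_le_mul_of_nonneg_left (hsep x hx).2.1 (sq_nonneg _)
      _ = (a * J).re := by
          rw [hJ, ← integral_const_mul]; exact integral_re hint
      _ ≤ ‖a * J‖ := Complex.re_le_norm _
      _ = ‖a‖ * ‖J‖ := norm_mul _ _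
  have hIup : ‖I‖ ≤ D * √(∫ x, ‖Q.eval x‖ ^ 2 ∂μ) := by
    calc ‖I‖ ≤ ∫ x, D * (‖(p n).eval x‖ * ‖Q.eval x‖) ∂μ := by
          refine norm_integral_le_of_norm_le (integrable_of_continuous_s11 hK hμK (by fun_prop)) ?_
          filter_upwards [ae_mem_of_compl hμK] with x hx
          rw [norm_mul, norm_mul, RCLike.norm_conj, mul_comm]
          exact mul_le_mul_of_nonneg_right (hsep x hx).2.2 (by positivity)
      _ ≤ D * √(∫ x, ‖Q.eval x‖ ^ 2 ∂μ) := by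
          rw [integral_const_mul]
          exact mul_le_mul_of_nonneg_left (integral_norm_mul_norm_le hK hμK hON n Q) hD.le
  have hnorm : ‖Q.eval z‖ * ‖J‖ = ‖(p n).eval z‖ * ‖I‖ := by
    rw [← norm_mul, ← norm_mul, hid]
  set s := √(∫ x, ‖Q.eval x‖ ^ 2 ∂μ)
  have h1 : ‖Q.eval z‖ * δ ≤ ‖a‖ * D * s * ‖(p n).eval z‖ := by
    calc ‖Q.eval z‖ * δ ≤ ‖Q.eval z‖ * (‖a‖ * ‖J‖) := by gcongr
      _ = ‖a‖ * (‖(p n).eval z‖ * ‖I‖) := by rw [← hnorm]; ring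
      _ ≤ ‖a‖ * (‖(p n).eval z‖ * (D * s)) := by gcongr
      _ = ‖a‖ * D * s * ‖(p n).eval z‖ := by ring
  calc ‖Q.eval z‖ = ‖Q.eval z‖ * δ / δ := by field_simp
    _ ≤ ‖a‖ * D * s * ‖(p n).eval z‖ / δ := by gcongr
    _ = ‖a‖ * D / δ * s * ‖(p n).eval z‖ := by ring

/-- Since `|z ^ m - 1| ≤ 1` on the support, `(z ^ m - 1) p_{n-m}` lies in the unit ball, and its
inner product with the unit vector `p_n` is `κ_{n-m} / κ_n`. -/
lemma integral_normSq_sub_le {m : ℕ} (hm : 1 ≤ m) (hK : IsCompact K) (hμK : μ Kᶜ = 0)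
    (hE : K ⊆ {z : ℂ | ‖z ^ m - 1‖ ≤ 1}) (hON : OrthonormalPolys μ p κ) (k : ℕ) :
    ∫ x, ‖((Polynomial.X ^ m - 1) * p k - p (k + m)).eval x‖ ^ 2 ∂μ
      ≤ 2 * (1 - κ k / κ (k + m)) := by
  have hκ : (κ (k + m) : ℂ) ≠ 0 := by exact_mod_cast (hON.2.1 (k + m)).ne'
  set W : Polynomial ℂ := (Polynomial.X ^ m - 1) * p k with hW
  have hXm : (Polynomial.X ^ m - 1 : Polynomial ℂ).degree = m := by
    simpa using Polynomial.degree_X_pow_sub_C (R := ℂ) (by omega : 0 < m) 1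
  have hXl : (Polynomial.X ^ m - 1 : Polynomial ℂ).leadingCoeff = 1 := by
    simpa using Polynomial.leadingCoeff_X_pow_sub_C (R := ℂ) (r := 1) (by omega : 0 < m)
  have hWdeg : W.degree = ((k + m : ℕ) : WithBot ℕ) := by
    rw [hW, Polynomial.degree_mul, hXm, hON.1 k, add_comm]; rfl
  have hWlead : W.leadingCoeff = κ k := by
    rw [hW, Polynomial.leadingCoeff_mul, hXl, hON.2.2.1 k, one_mul]
  have hlow : (W - Polynomial.C ((κ k : ℂ) / κ (k + m)) * p (k + m)).degree
      < ((k + m : ℕ) : WithBot ℕ) := by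
    have hκk : (κ k : ℂ) ≠ 0 := by exact_mod_cast (hON.2.1 k).ne'
    rw [← hWdeg]
    refine Polynomial.degree_sub_lt_left ?_ ?_ ?_
    · rw [Polynomial.degree_C_mul (div_ne_zero hκk hκ), hON.1, hWdeg]
    · intro h0
      rw [h0, Polynomial.degree_zero] at hWdeg
      exact WithBot.bot_ne_coe hWdeg
    · rw [hWlead, Polynomial.leadingCoeff_mul, Polynomial.leadingCoeff_C, hON.2.2.1]
      field_simp
  have hinner : ∫ x, (starRingEnd ℂ) ((p (k + m)).eval x) * W.eval x ∂μ
      = ((κ k / κ (k + m) : ℝ) : ℂ) := by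
    have h1 := integral_conj_mul_of_degree_lt hK hμK hON (k + m) _ hlow
    have h2 : ∀ x, (starRingEnd ℂ) ((p (k + m)).eval x)
        * (W - Polynomial.C ((κ k : ℂ) / κ (k + m)) * p (k + m)).eval x
        = (starRingEnd ℂ) ((p (k + m)).eval x) * W.eval x
          - ((κ k : ℂ) / κ (k + m))
            * ((starRingEnd ℂ) ((p (k + m)).eval x) * (p (k + m)).eval x) := by
      intro x
      simp only [Polynomial.eval_sub, Polynomial.eval_mul, Polynomial.eval_C]; ring
    simp only [h2] at h1
    rw [integral_sub (integrable_of_continuous_s11 hK hμK (by fun_prop))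
      (integrable_of_continuous_s11 hK hμK (by fun_prop)), integral_const_mul,
      hON.2.2.2, if_pos rfl, mul_one] at h1
    push_cast
    linear_combination h1
  have hre : ∫ x, ((starRingEnd ℂ) ((p (k + m)).eval x) * W.eval x).re ∂μ = κ k / κ (k + m) := by
    have hint : Integrable (fun x => (starRingEnd ℂ) ((p (k + m)).eval x) * W.eval x) μ :=
      integrable_of_continuous_s11 hK hμK (by fun_prop)
    have := integral_re hint
    rw [hinner] at this
    simpa using this
  have hWnorm : ∫ x, ‖W.eval x‖ ^ 2 ∂μ ≤ 1 := by
    rw [← integral_normSq_eq_one hON k]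
    refine integral_mono_ae (integrable_of_continuous_s11 hK hμK (by fun_prop))
      (integrable_of_continuous_s11 hK hμK (by fun_prop)) ?_
    filter_upwards [ae_mem_of_compl hμK] with x hx
    have h1 : ‖x ^ m - 1‖ ≤ 1 := hE hx
    have h2 : ‖W.eval x‖ ≤ ‖(p k).eval x‖ := by
      rw [hW, Polynomial.eval_mul, norm_mul]
      simpa using mul_le_mul_of_nonneg_right h1 (norm_nonneg ((p k).eval x))
    gcongr
  have hexp : ∀ x, ‖(W - p (k + m)).eval x‖ ^ 2 = ‖W.eval x‖ ^ 2 + ‖(p (k + m)).eval x‖ ^ 2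
      - 2 * ((starRingEnd ℂ) ((p (k + m)).eval x) * W.eval x).re := by
    intro x
    simp only [Polynomial.eval_sub, ← Complex.normSq_eq_norm_sq, Complex.normSq_apply,
      Complex.sub_re, Complex.sub_im, Complex.mul_re, Complex.conj_re, Complex.conj_im]
    ring
  simp only [hexp]
  rw [integral_sub (integrable_of_continuous_s11 hK hμK (by fun_prop))
      (integrable_of_continuous_s11 hK hμK (by fun_prop)),
    integral_add (integrable_of_continuous_s11 hK hμK (by fun_prop))
      (integrable_of_continuous_s11 hK hμK (by fun_prop)),
    integral_const_mul, hre, integral_normSq_eq_one hON]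
  linarith

end OrthonormalPolynomials

/-! ### Ratio asymptotics -/


theorem lemniscate_ratio_asymptotics_along_density_one
    (m : ℕ) (hm : 1 ≤ m)
    (μ : Measure ℂ) [IsFiniteMeasure μ]
    (hc : IsCompact (measSupport μ)) (hi : (measSupport μ).Infinite)
    (hE : measSupport μ ⊆ {z : ℂ | ‖z ^ m - 1‖ ≤ 1})
    (hbd : {z : ℂ | ‖z ^ m - 1‖ = 1} ⊆ measSupport μ)
    (p : ℕ → Polynomial ℂ) (κ : ℕ → ℝ) (hON : OrthonormalPolys μ p κ)
    (hreg : Tendsto (fun n : ℕ => (κ n) ^ ((n : ℝ)⁻¹)) atTop (𝓝 1)) :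
    ∃ 𝒩 : Set ℕ, hasDensityOne 𝒩 ∧
      ∀ z : ℂ, z ∉ convexHull ℝ (measSupport μ) →
        Tendsto (fun n => (z ^ m - 1) * (p (n - m)).eval z / (p n).eval z)
          (atTop ⊓ 𝓟 𝒩) (𝓝 1) := by
  have hμK := measure_compl_measSupport μ
  have hdist := integral_normSq_sub_le hm hc hμK hE hON
  have hκ := hON.2.1
  have hratio : ∀ k, κ k / κ (k + m) ≤ 1 := fun k => by
    have h0 : 0 ≤ ∫ x, ‖((Polynomial.X ^ m - 1) * p k - p (k + m)).eval x‖ ^ 2 ∂μ :=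
      integral_nonneg fun x => sq_nonneg _
    linarith [hdist k]
  set L : ℕ → ℝ := fun n => Real.log (κ n) with hLdef
  have hL : Tendsto (fun n : ℕ => L n / n) atTop (𝓝 0) := by
    have h1 := hreg.log one_ne_zero
    rw [Real.log_one] at h1
    refine h1.congr fun n => ?_
    rw [Real.log_rpow (hκ n), hLdef, div_eq_inv_mul]
  -- the logarithmic increments dominate `1 - κ_{n-m} / κ_n`
  set a : ℕ → ℝ := fun j => if m ≤ j then L j - L (j - m) else 0 with hadef
  have hakey : ∀ k, 1 - κ k / κ (k + m) ≤ a (k + m) := fun k => by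
    have hpos : 0 < κ k / κ (k + m) := div_pos (hκ _) (hκ _)
    have h1 := Real.log_le_sub_one_of_pos hpos
    rw [Real.log_div (hκ _).ne' (hκ _).ne'] at h1
    simp only [hadef, hLdef, if_pos (Nat.le_add_left m k), Nat.add_sub_cancel]
    linarith
  have ha0 : ∀ n, 0 ≤ a n := fun n => by
    by_cases h : m ≤ n
    · obtain ⟨k, rfl⟩ := Nat.exists_eq_add_of_le' h
      linarith [hakey k, hratio k]
    · simp [hadef, h]
  obtain ⟨S, hS, hlim⟩ := exists_density_one_tendsto_zero a ha0 (tendsto_sum_increments m L hL)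
  refine ⟨S, hS, fun z hz => ?_⟩
  obtain ⟨C, hC⟩ := exists_norm_eval_le hc hμK hON z hz
  have hpz : ∀ n, (p n).eval z ≠ 0 := fun n h0 => by
    have := hC n 1 (by rw [Polynomial.degree_one]; exact_mod_cast Nat.zero_le n)
    rw [h0] at this
    norm_num at this
  have hlim2 : Tendsto (fun n => |C| * √(2 * a n)) (atTop ⊓ 𝓟 S) (𝓝 0) := by
    have h1 := (Real.continuous_sqrt.tendsto 0).comp
      (by simpa using hlim.const_mul 2 : Tendsto (fun n => 2 * a n) (atTop ⊓ 𝓟 S) (𝓝 0))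
    simpa using h1.const_mul |C|
  rw [tendsto_iff_norm_sub_tendsto_zero]
  refine squeeze_zero' (Eventually.of_forall fun n => norm_nonneg _) ?_ hlim2
  filter_upwards [(eventually_ge_atTop m).filter_mono inf_le_left] with n hn
  obtain ⟨k, rfl⟩ := Nat.exists_eq_add_of_le' hn
  rw [Nat.add_sub_cancel]
  set Q := (Polynomial.X ^ m - 1) * p k - p (k + m) with hQ
  have hQdeg : Q.degree ≤ ((k + m : ℕ) : WithBot ℕ) := by
    refine (Polynomial.degree_sub_le _ _).trans (max_le ?_ (hON.1 _).le)
    rw [Polynomial.degree_mul, hON.1 k, add_comm, Nat.cast_add]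
    gcongr
    simpa using (Polynomial.degree_X_pow_sub_C (R := ℂ) (by omega : 0 < m) 1).le
  have heq : (z ^ m - 1) * (p k).eval z / (p (k + m)).eval z - 1
      = Q.eval z / (p (k + m)).eval z := by
    have := hpz (k + m)
    rw [hQ]
    simp only [Polynomial.eval_sub, Polynomial.eval_mul, Polynomial.eval_pow, Polynomial.eval_X,
      Polynomial.eval_one]
    field_simp
  rw [heq, norm_div, div_le_iff₀ (norm_pos_iff.2 (hpz _))]
  refine (hC (k + m) Q hQdeg).trans ?_
  gcongr
  · exact le_abs_self C
  · linarith [hdist k, hakey k]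
end
end

section
/- Let μ be a finite positive Borel measure on ℂ with compact infinite support, let x ∈ ℂ, t > 0, and set μ_x = μ + tδ_x. Then the following are equivalent: (i) κ_n(μ_x)/κ_n(μ) → 1 and p_n(z;μ_x)/p_n(z;μ) → 1 uniformly on every compact subset of ℂ ∖ ch(μ) as n → ∞; (ii) |p_n(x;μ)|² / K_{n−1}(x,x;μ) → 0 as n → ∞. -/
/-!
Write `c_n = κ'_n / κ_n` and `K_n(z, x) = ∑_{j < n} p_j(z) conj (p_j(x))`. Expanding
`q_n - c_n p_n` in the orthonormal basis `p_0, …, p_{n-1}` gives (`uvarov_formula`)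
`q_n(z) = c_n p_n(z) - t q_n(x) K_n(z, x)`. Evaluating at `z = x` (`uvarov_eval`) and pairing with
`p_n` (`uvarov_ratio`) yields `q_n(x) (1 + t K_n(x, x)) = c_n p_n(x)` and
`c_n⁻² = 1 + t |p_n(x)|² / (1 + t K_n(x, x))`. As `K_n(x, x)` is nonnegative, and bounded below by
`κ_0² > 0` once `n ≥ 1`, the second identity shows that `c_n → 1` is equivalent to
`|p_n(x)|² / K_n(x, x) → 0` (`ratio_tendsto_iff`).

It remains to deduce the convergence of `q_n / p_n` from this. For `z` outside the convex hull and
`deg f ≤ n`, the identity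
`∫ conj (p_n(w)) f(w) / (z - w) dμ(w) = f(z) ∫ conj (p_n(w)) / (z - w) dμ(w)`
(`cauchy_transform_identity`), used both for `f` and for `p_n` itself, gives
`f(z) / p_n(z) = ∫ conj (p_n) f / (z - w) dμ / ∫ |p_n|² / (z - w) dμ`. The denominator stays away
from `0` because `1 / (z - w)`, for `w` in the hull, lies in a half-plane away from the origin;
the numerator is controlled by Cauchy–Schwarz. So `|f(z)| ≤ B ‖f‖ |p_n(z)|` with a constant `B`
uniform on compact sets off the hull (`exists_uniform_ratio_bound`). With `f = K_n(·, x)`, whose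
norm is `√K_n(x, x)`, this gives
`|q_n(z) / p_n(z) - 1| ≤ |c_n - 1| + B c_n |p_n(x)| / √K_n(x, x)`, which tends to `0`.
-/

open MeasureTheory Filter Topology Polynomial

noncomputable section

/-! ### Convex hulls of compact sets in the plane -/

/-- By Carathéodory's theorem the hull is the image of the compact set `stdSimplex × S³` under
the continuous map `(w, z) ↦ ∑ wᵢ zᵢ`. -/
lemma isCompact_convexHull_complex_s12 {S : Set ℂ} (hS : IsCompact S) :
    IsCompact (convexHull ℝ S) := by
  rcases S.eq_empty_or_nonempty with rfl | ⟨s₀, hs₀⟩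
  · simp
  have hcomp : IsCompact (stdSimplex ℝ (Fin 3) ×ˢ (Set.univ.pi fun _ : Fin 3 => S)) :=
    (isCompact_stdSimplex ℝ (Fin 3)).prod (isCompact_univ_pi fun _ => hS)
  have himg := hcomp.image (f := fun a : (Fin 3 → ℝ) × (Fin 3 → ℂ) => ∑ i, a.1 i • a.2 i)
    (by fun_prop)
  convert himg using 1
  apply Set.Subset.antisymm
  · intro y hy
    obtain ⟨ι, _, z, w, hz, hind, hw, hsum, hy⟩ := eq_pos_convex_span_of_mem_convexHull hy
    have hcard : Fintype.card ι ≤ Fintype.card (Fin 3) := by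
      have h1 := hind.card_le_finrank_succ
      have h2 := Submodule.finrank_le (vectorSpan ℝ (Set.range z))
      rw [Complex.finrank_real_complex] at h2
      simp only [Fintype.card_fin]
      omega
    -- Pad the convex combination with zero weights so that it is indexed by `Fin 3`.
    obtain ⟨e⟩ := Function.Embedding.nonempty_of_card_le hcard
    have hwe : ∀ i, Function.extend e w 0 (e i) = w i := e.injective.extend_apply w 0
    have hze : ∀ i, Function.extend e z (fun _ => s₀) (e i) = z i :=
      e.injective.extend_apply z _
    have hw0 : ∀ i ∉ Set.range e, Function.extend e w 0 i = 0 := fun i hi => by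
      rw [Function.extend_apply' _ _ _ (by simpa using hi)]; rfl
    refine ⟨(Function.extend e w 0, Function.extend e z fun _ => s₀), ⟨⟨fun i => ?_, ?_⟩, ?_⟩, ?_⟩
    · by_cases hi : i ∈ Set.range e
      · obtain ⟨j, rfl⟩ := hi
        exact (hw j).le.trans_eq (hwe j).symm
      · exact (hw0 i hi).ge
    · rw [← hsum]
      exact (Fintype.sum_of_injective e e.injective _ _ hw0 fun i => (hwe i).symm).symm
    · intro i _
      by_cases hi : i ∈ Set.range e
      · obtain ⟨j, rfl⟩ := hi
        change Function.extend e z (fun _ => s₀) (e j) ∈ S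
        rw [hze]; exact hz ⟨j, rfl⟩
      · change Function.extend e z (fun _ => s₀) i ∈ S
        rw [Function.extend_apply' _ _ _ (by simpa using hi)]; exact hs₀
    · rw [← hy]
      refine (Fintype.sum_of_injective e e.injective _ _ (fun i hi => ?_) fun i => ?_).symm
      · simp only [hw0 i hi, zero_smul]
      · simp only [hwe, hze]
  · rintro _ ⟨⟨w, z⟩, ⟨hw, hz⟩, rfl⟩
    exact (convex_convexHull ℝ S).sum_mem (fun i _ => hw.1 i) hw.2
      fun i _ => subset_convexHull ℝ S (hz i trivial)

/-! ### Integrability and the pairing of polynomials -/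

lemma measSupport_ae (μ : Measure ℂ) : ∀ᵐ w ∂μ, w ∈ measSupport μ := by
  have h : measSupport μ = μ.support := by
    ext y
    rw [Measure.mem_support_iff_forall]
    simp only [measSupport, Set.mem_ofPred_eq, pos_iff_ne_zero]
  rw [h]
  exact Measure.support_mem_ae

lemma integrable_of_continuousOn_measSupport (μ : Measure ℂ) [IsFiniteMeasure μ]
    (hc : IsCompact (measSupport μ)) {f : ℂ → ℂ} (hf : ContinuousOn f (measSupport μ)) :
    Integrable f μ := by
  have h := hf.integrableOn_compact (μ := μ) hc
  rwa [IntegrableOn, Measure.restrict_eq_self_of_ae_mem (measSupport_ae μ)] at h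

/-- The property of a measure that makes all the inner products of polynomials genuine
(non-junk) integrals. -/
def IntegratesContinuous (ν : Measure ℂ) : Prop := ∀ f : ℂ → ℂ, Continuous f → Integrable f ν

/-- The sesquilinear pairing `⟨f, g⟩ = ∫ conj f * g dν` on polynomials. -/
def pair (ν : Measure ℂ) (f g : ℂ[X]) : ℂ :=
  ∫ z, (starRingEnd ℂ) (f.eval z) * g.eval z ∂ν

section Pairing

variable {ν : Measure ℂ}

lemma IntegratesContinuous.integrable_pair (h : IntegratesContinuous ν) (f g : ℂ[X]) :
    Integrable (fun z => (starRingEnd ℂ) (f.eval z) * g.eval z) ν :=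
  h _ ((Complex.continuous_conj.comp f.continuous).mul g.continuous)

lemma pair_conj (f g : ℂ[X]) : (starRingEnd ℂ) (pair ν f g) = pair ν g f := by
  unfold pair
  rw [← integral_conj]
  simp [mul_comm]

lemma pair_add (h : IntegratesContinuous ν) (f g₁ g₂ : ℂ[X]) :
    pair ν f (g₁ + g₂) = pair ν f g₁ + pair ν f g₂ := by
  unfold pair
  rw [← integral_add (h.integrable_pair f g₁) (h.integrable_pair f g₂)]
  simp [mul_add]

lemma pair_C_mul (f g : ℂ[X]) (a : ℂ) : pair ν f (C a * g) = a * pair ν f g := by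
  unfold pair
  rw [← integral_const_mul]
  congr 1; ext z; simp; ring

lemma pair_sum (h : IntegratesContinuous ν) (f : ℂ[X]) (s : Finset ℕ) (g : ℕ → ℂ[X]) :
    pair ν f (∑ j ∈ s, g j) = ∑ j ∈ s, pair ν f (g j) := by
  classical
  induction s using Finset.induction_on with
  | empty => simp [pair]
  | insert a s ha ih => rw [Finset.sum_insert ha, Finset.sum_insert ha, pair_add h, ih]

lemma pair_self (f : ℂ[X]) : pair ν f f = ((∫ z, ‖f.eval z‖ ^ 2 ∂ν : ℝ) : ℂ) := by
  unfold pair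
  rw [← integral_complex_ofReal]
  congr 1; ext z
  rw [← Complex.normSq_eq_conj_mul_self, Complex.normSq_eq_norm_sq]

lemma pair_add_dirac {x : ℂ} {t : ℝ} (ht : 0 < t) (h : IntegratesContinuous ν) (f g : ℂ[X]) :
    pair (ν + ENNReal.ofReal t • Measure.dirac x) f g =
      pair ν f g + t * ((starRingEnd ℂ) (f.eval x) * g.eval x) := by
  unfold pair
  rw [integral_add_measure (h.integrable_pair f g)
    ((integrable_dirac enorm_lt_top).smul_measure ENNReal.ofReal_ne_top), integral_smul_measure,
    integral_dirac, ENNReal.toReal_ofReal ht.le, Complex.real_smul]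

lemma IntegratesContinuous.add_dirac (h : IntegratesContinuous ν) (x : ℂ) (t : ℝ) :
    IntegratesContinuous (ν + ENNReal.ofReal t • Measure.dirac x) := fun f hf =>
  (h f hf).add_measure ((integrable_dirac enorm_lt_top).smul_measure ENNReal.ofReal_ne_top)

variable {p : ℕ → ℂ[X]} {κ : ℕ → ℝ}

lemma OrthonormalPolys.pair_eq (hON : OrthonormalPolys ν p κ) (n m : ℕ) :
    pair ν (p n) (p m) = if n = m then 1 else 0 := hON.2.2.2 n m

/-- Subtracting the right multiple of `p n` kills the coefficient of degree `n`. -/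
lemma OrthonormalPolys.degree_sub_lt (hON : OrthonormalPolys ν p κ) {n : ℕ} {f : ℂ[X]}
    (hf : f.degree ≤ n) : (f - C (f.coeff n / κ n) * p n).degree < n := by
  rw [degree_lt_iff_coeff_zero]
  intro m hm
  have hκ : (κ n : ℂ) ≠ 0 := by exact_mod_cast (hON.2.1 n).ne'
  have hcoeff : (p n).coeff n = κ n := by
    rw [← hON.2.2.1 n, leadingCoeff, natDegree_eq_of_degree_eq_some (hON.1 n)]
  rcases hm.eq_or_lt with rfl | hm
  · rw [coeff_sub, coeff_C_mul, hcoeff, div_mul_cancel₀ _ hκ, sub_self]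
  · rw [coeff_sub, coeff_C_mul, coeff_eq_zero_of_degree_lt (lt_of_le_of_lt hf (by exact_mod_cast hm)),
      coeff_eq_zero_of_degree_lt (p := p n) (by rw [hON.1 n]; exact_mod_cast hm)]
    simp

lemma OrthonormalPolys.exists_expansion (hON : OrthonormalPolys ν p κ) (n : ℕ) :
    ∀ f : ℂ[X], f.degree < n → ∃ a : ℕ → ℂ, f = ∑ j ∈ Finset.range n, C (a j) * p j := by
  induction n with
  | zero =>
    intro f hf
    refine ⟨0, ?_⟩
    rw [Finset.range_zero, Finset.sum_empty, ← degree_eq_bot]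
    simpa [Nat.WithBot.lt_zero_iff] using hf
  | succ n ih =>
    intro f hf
    obtain ⟨a, ha⟩ := ih _ (hON.degree_sub_lt (Order.le_of_lt_succ (by exact_mod_cast hf)))
    refine ⟨fun j => if j = n then f.coeff n / κ n else a j, ?_⟩
    simp only
    rw [Finset.sum_range_succ, if_pos rfl]
    rw [Finset.sum_congr rfl fun j hj => by
      rw [if_neg (Finset.mem_range.1 hj).ne]]
    rw [← ha]; ring

/-- The coefficients of the expansion are the Fourier coefficients. -/
lemma OrthonormalPolys.expansion (h : IntegratesContinuous ν) (hON : OrthonormalPolys ν p κ)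
    {n : ℕ} {f : ℂ[X]} (hf : f.degree < n) :
    f = ∑ j ∈ Finset.range n, C (pair ν (p j) f) * p j := by
  obtain ⟨a, ha⟩ := hON.exists_expansion n f hf
  have hcoef : ∀ j ∈ Finset.range n, pair ν (p j) f = a j := by
    intro j hj
    rw [ha, pair_sum h]
    simp only [pair_C_mul, hON.pair_eq]
    simp [Finset.mem_range.1 hj]
  rw [Finset.sum_congr rfl fun j hj => by rw [hcoef j hj]]
  exact ha

lemma OrthonormalPolys.pair_eq_zero (h : IntegratesContinuous ν) (hON : OrthonormalPolys ν p κ)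
    {n : ℕ} {f : ℂ[X]} (hf : f.degree < n) : pair ν (p n) f = 0 := by
  obtain ⟨a, ha⟩ := hON.exists_expansion n f hf
  rw [ha, pair_sum h]
  refine Finset.sum_eq_zero fun j hj => ?_
  rw [pair_C_mul, hON.pair_eq, if_neg (Finset.mem_range.1 hj).ne', mul_zero]

end Pairing

/-! ### The Christoffel–Darboux kernel -/

/-- The Christoffel–Darboux kernel `∑_{j < n} conj (p_j x) p_j`, of degree less than `n`, as a
polynomial in its first variable. -/
def cdPoly (p : ℕ → ℂ[X]) (x : ℂ) (n : ℕ) : ℂ[X] :=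
  ∑ j ∈ Finset.range n, C ((starRingEnd ℂ) ((p j).eval x)) * p j

/-- The diagonal kernel `∑_{j < n} |p_j x|²`. -/
def cdDiag (p : ℕ → ℂ[X]) (x : ℂ) (n : ℕ) : ℝ := ∑ j ∈ Finset.range n, ‖(p j).eval x‖ ^ 2

section Kernel

variable {ν : Measure ℂ} {p : ℕ → ℂ[X]} {κ : ℕ → ℝ}

lemma cdPoly_eval_self (x : ℂ) (n : ℕ) : (cdPoly p x n).eval x = cdDiag p x n := by
  simp only [cdPoly, cdDiag, eval_finsetSum, eval_mul, eval_C, Complex.ofReal_sum]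
  refine Finset.sum_congr rfl fun j _ => ?_
  rw [← Complex.normSq_eq_conj_mul_self, Complex.normSq_eq_norm_sq]

lemma cdDiag_nonneg (x : ℂ) (n : ℕ) : 0 ≤ cdDiag p x n :=
  Finset.sum_nonneg fun _ _ => sq_nonneg _

lemma OrthonormalPolys.degree_cdPoly_lt (hON : OrthonormalPolys ν p κ) (x : ℂ) (n : ℕ) :
    (cdPoly p x n).degree < n := by
  refine (Polynomial.degree_sum_le _ _).trans_lt ?_
  refine (Finset.sup_lt_iff (WithBot.bot_lt_coe n)).2 fun j hj => ?_
  rw [← smul_eq_C_mul]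
  refine (degree_smul_le _ _).trans_lt ?_
  rw [hON.1 j]
  exact Nat.cast_lt.2 (Finset.mem_range.1 hj)

/-- The reproducing identity `‖K(·, x)‖² = K(x, x)`. -/
lemma OrthonormalPolys.integral_cdPoly_sq (h : IntegratesContinuous ν)
    (hON : OrthonormalPolys ν p κ) (x : ℂ) (n : ℕ) :
    ∫ z, ‖(cdPoly p x n).eval z‖ ^ 2 ∂ν = cdDiag p x n := by
  have h1 : ∀ j ∈ Finset.range n, pair ν (p j) (cdPoly p x n) =
      (starRingEnd ℂ) ((p j).eval x) := by
    intro j hj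
    rw [cdPoly, pair_sum h]
    simp only [pair_C_mul, hON.pair_eq]
    simp [Finset.mem_range.1 hj]
  have h2 : pair ν (cdPoly p x n) (cdPoly p x n) = cdDiag p x n := by
    conv_lhs => rw [cdPoly, pair_sum h, ← cdPoly]
    rw [← cdPoly_eval_self, cdPoly, eval_finsetSum]
    refine Finset.sum_congr rfl fun j hj => ?_
    rw [pair_C_mul, ← pair_conj, ← cdPoly, h1 j hj]
    simp
  rw [pair_self] at h2
  exact_mod_cast h2

/-- Since `p 0` is a nonzero constant, the diagonal kernel is bounded below. -/
lemma OrthonormalPolys.cdDiag_ge (hON : OrthonormalPolys ν p κ) (x : ℂ) {n : ℕ} (hn : 1 ≤ n) :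
    κ 0 ^ 2 ≤ cdDiag p x n := by
  have h0 : ‖(p 0).eval x‖ ^ 2 = κ 0 ^ 2 := by
    have hd : (p 0).degree ≤ 0 := by rw [hON.1 0]; rfl
    have hl := hON.2.2.1 0
    rw [leadingCoeff, natDegree_eq_of_degree_eq_some (hON.1 0)] at hl
    rw [eq_C_of_degree_le_zero hd, eval_C, hl, Complex.norm_real, Real.norm_eq_abs, sq_abs]
  rw [← h0]
  exact Finset.single_le_sum (f := fun j => ‖(p j).eval x‖ ^ 2) (fun _ _ => sq_nonneg _)
    (Finset.mem_range.2 hn)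

end Kernel

/-! ### Adding a point mass -/

section Uvarov

variable {μ : Measure ℂ} {x : ℂ} {t : ℝ} {p q : ℕ → ℂ[X]} {κ κ' : ℕ → ℝ}

/-- Expand `q_n - (κ'_n / κ_n) p_n`, which has degree less than `n`, in the `p_j`: orthogonality
of `q_n` to `p_j` for the perturbed measure makes the coefficients `-t q_n(x) conj (p_j x)`. -/
lemma uvarov_formula (ht : 0 < t) (h : IntegratesContinuous μ) (hON : OrthonormalPolys μ p κ)
    (hON' : OrthonormalPolys (μ + ENNReal.ofReal t • Measure.dirac x) q κ') (n : ℕ) :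
    q n = C ((κ' n / κ n : ℝ) : ℂ) * p n + C (-(t * (q n).eval x)) * cdPoly p x n := by
  have h' := h.add_dirac x t
  have hq : (q n).coeff n = κ' n := by
    rw [← hON'.2.2.1 n, leadingCoeff, natDegree_eq_of_degree_eq_some (hON'.1 n)]
  have hd := hON.degree_sub_lt (f := q n) (n := n) (hON'.1 n).le
  rw [hq, ← Complex.ofReal_div] at hd
  set c : ℝ := κ' n / κ n
  have hexp := hON.expansion h hd
  have hcoef : ∀ j ∈ Finset.range n, pair μ (p j) (q n - C (c : ℂ) * p n) =
      -(t * (q n).eval x) * (starRingEnd ℂ) ((p j).eval x) := by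
    intro j hj
    have hj := Finset.mem_range.1 hj
    have h1 : pair (μ + ENNReal.ofReal t • Measure.dirac x) (p j) (q n) = 0 := by
      rw [← pair_conj, hON'.pair_eq_zero h' (by rw [hON.1 j]; exact_mod_cast hj), map_zero]
    rw [pair_add_dirac ht h] at h1
    have h2 : q n - C (c : ℂ) * p n = q n + C (-(c : ℂ)) * p n := by simp [sub_eq_add_neg]
    rw [h2, pair_add h, pair_C_mul, hON.pair_eq, if_neg hj.ne]
    linear_combination h1
  rw [Finset.sum_congr rfl fun j hj => by rw [hcoef j hj]] at hexp
  rw [cdPoly, Finset.mul_sum]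
  simp only [← mul_assoc, ← C_mul]
  rw [← hexp]; ring

/-- The value of `uvarov_formula` at `z = x`. -/
lemma uvarov_eval (ht : 0 < t) (h : IntegratesContinuous μ) (hON : OrthonormalPolys μ p κ)
    (hON' : OrthonormalPolys (μ + ENNReal.ofReal t • Measure.dirac x) q κ') (n : ℕ) :
    (q n).eval x * (1 + t * cdDiag p x n : ℝ) = (κ' n / κ n : ℝ) * (p n).eval x := by
  have h1 := congrArg (eval x) (uvarov_formula ht h hON hON' n)
  rw [eval_add, eval_mul, eval_mul, eval_C, eval_C, cdPoly_eval_self] at h1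
  push_cast at h1 ⊢
  linear_combination h1

/-- Computing `⟨p_n, q_n⟩` for the perturbed measure in two ways: from
`p_n = (κ_n / κ'_n) q_n + lower order`, and from the expansion of `q_n` in the `p_j`. -/
lemma uvarov_ratio (ht : 0 < t) (h : IntegratesContinuous μ) (hON : OrthonormalPolys μ p κ)
    (hON' : OrthonormalPolys (μ + ENNReal.ofReal t • Measure.dirac x) q κ') (n : ℕ) :
    (κ' n / κ n) ^ 2 * (1 + t * ‖(p n).eval x‖ ^ 2 / (1 + t * cdDiag p x n)) = 1 := by
  have h' := h.add_dirac x t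
  have hk := hON.2.1 n
  have hk' := hON'.2.1 n
  have hE := uvarov_eval ht h hON hON' n
  have hp : (p n).coeff n = κ n := by
    rw [← hON.2.2.1 n, leadingCoeff, natDegree_eq_of_degree_eq_some (hON.1 n)]
  have hd := hON'.degree_sub_lt (f := p n) (n := n) (hON.1 n).le
  rw [hp, ← Complex.ofReal_div] at hd
  have h1 : pair (μ + ENNReal.ofReal t • Measure.dirac x) (q n) (p n) = (κ n / κ' n : ℝ) := by
    have h2 := hON'.pair_eq_zero h' hd
    have h3 : p n = (p n - C ((κ n / κ' n : ℝ) : ℂ) * q n) + C ((κ n / κ' n : ℝ) : ℂ) * q n := by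
      ring
    rw [h3, pair_add h', h2, pair_C_mul, hON'.pair_eq]
    simp
  have h1' : pair (μ + ENNReal.ofReal t • Measure.dirac x) (p n) (q n) = (κ n / κ' n : ℝ) := by
    rw [← pair_conj, h1, Complex.conj_ofReal]
  have h4 : pair μ (p n) (q n) = (κ' n / κ n : ℝ) := by
    rw [uvarov_formula ht h hON hON' n, pair_add h, pair_C_mul, pair_C_mul, hON.pair_eq,
      hON.pair_eq_zero h (hON.degree_cdPoly_lt x n)]
    simp
  rw [pair_add_dirac ht h, h4] at h1'
  have hN : (starRingEnd ℂ) ((p n).eval x) * (p n).eval x = ((‖(p n).eval x‖ ^ 2 : ℝ) : ℂ) := by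
    rw [← Complex.normSq_eq_conj_mul_self, Complex.normSq_eq_norm_sq]
  have hD : 0 < 1 + t * cdDiag p x n := by
    have := cdDiag_nonneg (p := p) x n
    positivity
  set c : ℝ := κ' n / κ n with hcdef
  set D : ℝ := 1 + t * cdDiag p x n
  have hc0 : c ≠ 0 := (div_pos hk' hk).ne'
  have hinv : κ n / κ' n = c⁻¹ := by rw [hcdef, inv_div]
  rw [hinv] at h1'
  have h5 : (c * D + t * (c * ‖(p n).eval x‖ ^ 2) : ℝ) = c⁻¹ * D := by
    have : ((c * D + t * (c * ‖(p n).eval x‖ ^ 2) : ℝ) : ℂ) = ((c⁻¹ * D : ℝ) : ℂ) := by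
      push_cast at hN h1' ⊢
      rw [← h1']
      linear_combination (-(t : ℂ) * c) * hN - (t : ℂ) * (starRingEnd ℂ) ((p n).eval x) * hE
    exact_mod_cast this
  field_simp at h5 ⊢
  linear_combination h5

end Uvarov

/-! ### Ratio bounds off the convex hull -/

section Geometry

/-- The vector `u` from the nearest point of the hull to `z` separates `z` from the hull,
quantitatively. -/
lemma exists_separating {H : Set ℂ} (hH : IsCompact H) (hconv : Convex ℝ H) (hne : H.Nonempty)
    (z : ℂ) : ∃ u : ℂ, ‖u‖ = Metric.infDist z H ∧
      ∀ w ∈ H, ‖u‖ ^ 2 ≤ ((starRingEnd ℂ) (z - w) * u).re := by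
  obtain ⟨y, hy, hmin⟩ := exists_norm_eq_iInf_of_complete_convex hne hH.isComplete hconv z
  have hin := (norm_eq_iInf_iff_real_inner_le_zero hconv hy).1 hmin
  refine ⟨z - y, ?_, fun w hw => ?_⟩
  · rw [hmin, Metric.infDist_eq_iInf]
    simp only [dist_eq_norm]
  · have h1 := hin w hw
    rw [Complex.inner] at h1
    rw [← Complex.normSq_eq_norm_sq, Complex.normSq_apply]
    simp only [Complex.mul_re, Complex.conj_re, Complex.conj_im, Complex.sub_re,
      Complex.sub_im] at h1 ⊢
    nlinarith

end Geometry

section Ratio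

variable {μ : Measure ℂ} {p : ℕ → ℂ[X]} {κ : ℕ → ℝ}

/-- For `z` off the support and `deg f ≤ n`,
`∫ conj (p_n w) f w / (z - w) dμ(w) = f z ∫ conj (p_n w) / (z - w) dμ(w)`, because
`(f z - f w) / (z - w)` is a polynomial in `w` of degree less than `n`. -/
lemma cauchy_transform_identity [IsFiniteMeasure μ] (hc : IsCompact (measSupport μ))
    (h : IntegratesContinuous μ)
    (hON : OrthonormalPolys μ p κ) {n : ℕ} {f : ℂ[X]} (hf : f.degree ≤ n) {z : ℂ}
    (hz : z ∉ measSupport μ) :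
    ∫ w, (starRingEnd ℂ) ((p n).eval w) * f.eval w * (z - w)⁻¹ ∂μ =
      f.eval z * ∫ w, (starRingEnd ℂ) ((p n).eval w) * (z - w)⁻¹ ∂μ := by
  have hinv : ContinuousOn (fun w => (z - w)⁻¹) (measSupport μ) :=
    (continuousOn_const.sub continuousOn_id).inv₀ fun w hw h0 => hz (by
      rw [show z = w from sub_eq_zero.1 h0]; exact hw)
  have hpc : Continuous fun w => (starRingEnd ℂ) ((p n).eval w) :=
    Complex.continuous_conj.comp (p n).continuous
  have hI1 : Integrable (fun w => (starRingEnd ℂ) ((p n).eval w) * f.eval w * (z - w)⁻¹) μ :=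
    integrable_of_continuousOn_measSupport μ hc
      ((hpc.mul f.continuous).continuousOn.mul hinv)
  have hI2 : Integrable (fun w => f.eval z * ((starRingEnd ℂ) ((p n).eval w) * (z - w)⁻¹)) μ :=
    integrable_of_continuousOn_measSupport μ hc
      (continuousOn_const.mul (hpc.continuousOn.mul hinv))
  rw [← integral_const_mul, ← sub_eq_zero, ← integral_sub hI1 hI2]
  set g := f /ₘ (X - C z)
  have hg : (X - C z) * g = f - C (f.eval z) := by
    rw [X_sub_C_mul_divByMonic_eq_sub_modByMonic, modByMonic_X_sub_C_eq_C_eval]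
  have hgdeg : g.degree < n := by
    by_cases hf0 : f = 0
    · simp only [g, hf0, zero_divByMonic, degree_zero]
      exact WithBot.bot_lt_coe n
    · exact (degree_divByMonic_lt f _ hf0 (by simp)).trans_le hf
  have hzero : pair μ (p n) (-g) = 0 := hON.pair_eq_zero h (by rwa [degree_neg])
  rw [← hzero, pair]
  refine integral_congr_ae ?_
  filter_upwards [measSupport_ae μ] with w hw
  have hzw : z - w ≠ 0 := fun h0 => hz (by rw [sub_eq_zero.1 h0]; exact hw)
  have hge := congrArg (eval w) hg
  simp only [eval_mul, eval_sub, eval_X, eval_C] at hge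
  rw [eval_neg]
  field_simp
  linear_combination (-(starRingEnd ℂ) ((p n).eval w)) * hge

/-- Comparison of a polynomial of degree at most `n` and `L²` norm at most `M` with `p_n`, at a
point `z` that is separated from the support by the vector `u`. -/
lemma ratio_bound_s12 [IsFiniteMeasure μ] (hc : IsCompact (measSupport μ))
    (h : IntegratesContinuous μ)
    (hON : OrthonormalPolys μ p κ) {n : ℕ} {f : ℂ[X]} (hf : f.degree ≤ n) {z u : ℂ} {D M : ℝ}
    (hu : u ≠ 0) (hsep : ∀ w ∈ measSupport μ, ‖u‖ ^ 2 ≤ ((starRingEnd ℂ) (z - w) * u).re)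
    (hD0 : 0 < D) (hD : ∀ w ∈ measSupport μ, ‖z - w‖ ≤ D) (hM : 0 < M)
    (hfM : ∫ w, ‖f.eval w‖ ^ 2 ∂μ ≤ M ^ 2) :
    (p n).eval z ≠ 0 ∧ ‖f.eval z‖ * ‖u‖ ^ 2 ≤ D ^ 2 * M * ‖(p n).eval z‖ := by
  have hu0 : 0 < ‖u‖ := norm_pos_iff.2 hu
  have hdist : ∀ w ∈ measSupport μ, ‖u‖ ≤ ‖z - w‖ := by
    intro w hw
    have h1 := (hsep w hw).trans (Complex.re_le_norm _)
    rw [norm_mul, Complex.norm_conj, sq] at h1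
    exact le_of_mul_le_mul_right h1 hu0
  have hz : z ∉ measSupport μ := fun hz => by
    have := hdist z hz
    rw [sub_self, norm_zero] at this
    linarith
  have hinv : ContinuousOn (fun w => (z - w)⁻¹) (measSupport μ) :=
    (continuousOn_const.sub continuousOn_id).inv₀ fun w hw h0 => hz (by
      rw [show z = w from sub_eq_zero.1 h0]; exact hw)
  have hpc : Continuous fun w => (starRingEnd ℂ) ((p n).eval w) :=
    Complex.continuous_conj.comp (p n).continuous
  have hsqint : ∀ g : ℂ[X], Integrable (fun w => ‖g.eval w‖ ^ 2) μ := fun g => by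
    have := (h.integrable_pair g g).norm
    refine this.congr (ae_of_all _ fun w => ?_)
    simp [sq]
  have hone : ∫ w, ‖(p n).eval w‖ ^ 2 ∂μ = 1 := by
    have := hON.pair_eq n n
    rw [pair_self, if_pos rfl] at this
    exact_mod_cast this
  have hidp := cauchy_transform_identity hc h hON (hON.1 n).le hz
  have hidf := cauchy_transform_identity hc h hON hf hz
  set A := ∫ w, (starRingEnd ℂ) ((p n).eval w) * (z - w)⁻¹ ∂μ
  -- Lower bound: `u / (z - w)` has real part at least `‖u‖² / D²` on the support.
  have hlow : ‖u‖ / D ^ 2 ≤ ‖(p n).eval z‖ * ‖A‖ := by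
    have hI : Integrable (fun w => (starRingEnd ℂ) ((p n).eval w) * (p n).eval w * (z - w)⁻¹ * u)
        μ := integrable_of_continuousOn_measSupport μ hc
      (((hpc.mul (p n).continuous).continuousOn.mul hinv).mul continuousOn_const)
    have h1 : ∫ w, ‖(p n).eval w‖ ^ 2 * (‖u‖ ^ 2 / D ^ 2) ∂μ ≤
        ∫ w, ((starRingEnd ℂ) ((p n).eval w) * (p n).eval w * (z - w)⁻¹ * u).re ∂μ := by
      refine integral_mono_ae ((hsqint _).mul_const _) hI.re ?_
      filter_upwards [measSupport_ae μ] with w hw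
      have hpos : 0 < ‖z - w‖ := hu0.trans_le (hdist w hw)
      have e1 : (starRingEnd ℂ) ((p n).eval w) * (p n).eval w * (z - w)⁻¹ * u =
          ((‖(p n).eval w‖ ^ 2 * (‖z - w‖ ^ 2)⁻¹ : ℝ) : ℂ) * ((starRingEnd ℂ) (z - w) * u) := by
        rw [← Complex.normSq_eq_conj_mul_self, Complex.inv_def, Complex.normSq_eq_norm_sq,
          Complex.normSq_eq_norm_sq]
        push_cast
        ring
      change _ ≤ ((starRingEnd ℂ) ((p n).eval w) * (p n).eval w * (z - w)⁻¹ * u).re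
      rw [e1, Complex.re_ofReal_mul, mul_assoc]
      refine mul_le_mul_of_nonneg_left ?_ (sq_nonneg _)
      rw [div_eq_inv_mul]
      have hs := hsep w hw
      have hDw := hD w hw
      gcongr
    rw [integral_mul_const, hone, one_mul] at h1
    have h2 : ∫ w, ((starRingEnd ℂ) ((p n).eval w) * (p n).eval w * (z - w)⁻¹ * u).re ∂μ =
        ((p n).eval z * A * u).re := by
      rw [← hidp, ← integral_mul_const]
      exact integral_re hI
    rw [h2] at h1
    have h3 := h1.trans (Complex.re_le_norm _)
    rw [norm_mul, norm_mul] at h3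
    refine le_of_mul_le_mul_right ?_ hu0
    calc ‖u‖ / D ^ 2 * ‖u‖ = ‖u‖ ^ 2 / D ^ 2 := by ring
      _ ≤ _ := h3
  -- Upper bound: Cauchy–Schwarz, in the form `ab ≤ (M a² + b² / M) / 2`.
  have hup : ‖f.eval z‖ * ‖A‖ ≤ M / ‖u‖ := by
    rw [← norm_mul, ← hidf]
    have h1 : ‖∫ w, (starRingEnd ℂ) ((p n).eval w) * f.eval w * (z - w)⁻¹ ∂μ‖ ≤
        ∫ w, (M / 2 * ‖(p n).eval w‖ ^ 2 + 1 / (2 * M) * ‖f.eval w‖ ^ 2) * ‖u‖⁻¹ ∂μ := by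
      refine norm_integral_le_of_norm_le
        ((((hsqint _).const_mul _).add ((hsqint _).const_mul _)).mul_const _) ?_
      filter_upwards [measSupport_ae μ] with w hw
      rw [norm_mul, norm_mul, Complex.norm_conj, norm_inv]
      have hdw := hdist w hw
      have hab : ‖(p n).eval w‖ * ‖f.eval w‖ ≤
          M / 2 * ‖(p n).eval w‖ ^ 2 + 1 / (2 * M) * ‖f.eval w‖ ^ 2 := by
        have e : M / 2 * ‖(p n).eval w‖ ^ 2 + 1 / (2 * M) * ‖f.eval w‖ ^ 2 -
            ‖(p n).eval w‖ * ‖f.eval w‖ =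
            (M * ‖(p n).eval w‖ - ‖f.eval w‖) ^ 2 / (2 * M) := by
          field_simp
          ring
        have : 0 ≤ (M * ‖(p n).eval w‖ - ‖f.eval w‖) ^ 2 / (2 * M) := by positivity
        linarith
      gcongr
    refine h1.trans ?_
    rw [integral_mul_const, integral_add ((hsqint _).const_mul _) ((hsqint _).const_mul _),
      integral_const_mul, integral_const_mul, hone, div_eq_mul_inv M ‖u‖]
    refine mul_le_mul_of_nonneg_right ?_ (inv_nonneg.2 hu0.le)
    calc M / 2 * 1 + 1 / (2 * M) * ∫ w, ‖f.eval w‖ ^ 2 ∂μ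
        ≤ M / 2 * 1 + 1 / (2 * M) * M ^ 2 := by gcongr
      _ = M := by field_simp; ring
  have hprod : 0 < ‖(p n).eval z‖ * ‖A‖ := lt_of_lt_of_le (by positivity) hlow
  refine ⟨fun h0 => by simp [h0] at hprod, ?_⟩
  have h1 : ‖f.eval z‖ * (‖u‖ / D ^ 2) ≤ ‖(p n).eval z‖ * (M / ‖u‖) :=
    calc ‖f.eval z‖ * (‖u‖ / D ^ 2) ≤ ‖f.eval z‖ * (‖(p n).eval z‖ * ‖A‖) := by gcongr
      _ = ‖(p n).eval z‖ * (‖f.eval z‖ * ‖A‖) := by ring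
      _ ≤ _ := by gcongr
  have h2 : ‖f.eval z‖ * ‖u‖ / D ^ 2 ≤ ‖(p n).eval z‖ * M / ‖u‖ := by
    rw [mul_div_assoc, mul_div_assoc]; exact h1
  rw [div_le_div_iff₀ (by positivity) hu0] at h2
  calc ‖f.eval z‖ * ‖u‖ ^ 2 = ‖f.eval z‖ * ‖u‖ * ‖u‖ := by ring
    _ ≤ _ := h2
    _ = _ := by ring

/-- The comparison of `ratio_bound` is uniform on compact sets off the convex hull. -/
lemma exists_uniform_ratio_bound [IsFiniteMeasure μ] (hc : IsCompact (measSupport μ))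
    (hne : (measSupport μ).Nonempty) (h : IntegratesContinuous μ)
    (hON : OrthonormalPolys μ p κ) {K : Set ℂ} (hK : IsCompact K)
    (hKH : K ⊆ (convexHull ℝ (measSupport μ))ᶜ) :
    ∃ B : ℝ, 0 < B ∧ ∀ n : ℕ, ∀ f : ℂ[X], f.degree ≤ n → ∀ M : ℝ, 0 < M →
      ∫ w, ‖f.eval w‖ ^ 2 ∂μ ≤ M ^ 2 → ∀ z ∈ K,
        (p n).eval z ≠ 0 ∧ ‖f.eval z‖ ≤ B * M * ‖(p n).eval z‖ := by
  rcases K.eq_empty_or_nonempty with rfl | hKne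
  · exact ⟨1, one_pos, by simp⟩
  have hH := isCompact_convexHull_complex_s12 hc
  have hHne : (convexHull ℝ (measSupport μ)).Nonempty := hne.convexHull
  obtain ⟨z₀, hz₀, hmin⟩ := hK.exists_isMinOn hKne
    (Metric.continuous_infDist_pt (convexHull ℝ (measSupport μ))).continuousOn
  set d := Metric.infDist z₀ (convexHull ℝ (measSupport μ))
  have hd : 0 < d := (hH.isClosed.notMem_iff_infDist_pos hHne).1 (hKH hz₀)
  obtain ⟨R, hR⟩ := (hK.isBounded.union hc.isBounded).exists_norm_le
  have hRz := (norm_nonneg _).trans (hR z₀ (Or.inl hz₀))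
  set D := 2 * R + 1
  have hD0 : 0 < D := by positivity
  refine ⟨D ^ 2 / d ^ 2, by positivity, fun n f hf M hM hfM z hz => ?_⟩
  obtain ⟨u, hu, hsep⟩ := exists_separating hH (convex_convexHull ℝ _) hHne z
  have hdu : d ≤ ‖u‖ := by rw [hu]; exact hmin hz
  have hb := ratio_bound_s12 hc h hON hf (norm_pos_iff.1 (hd.trans_le hdu))
    (fun w hw => hsep w (subset_convexHull ℝ _ hw)) hD0 (fun w hw => by
      have h1 := norm_sub_le z w
      have h2 := hR z (Or.inl hz)
      have h3 := hR w (Or.inr hw)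
      linarith) hM hfM
  refine ⟨hb.1, ?_⟩
  have h1 : ‖f.eval z‖ * d ^ 2 ≤ D ^ 2 * M * ‖(p n).eval z‖ :=
    le_trans (by gcongr) hb.2
  calc ‖f.eval z‖ ≤ D ^ 2 * M * ‖(p n).eval z‖ / d ^ 2 := by
        rwa [le_div_iff₀ (by positivity)]
    _ = _ := by ring

end Ratio

/-! ### The equivalence -/

/-- The leading coefficients are asymptotically equal exactly when
`|p_n x|² / K_{n-1}(x, x) → 0`. -/
lemma ratio_tendsto_iff {a k c : ℕ → ℝ} {t δ : ℝ} (ht : 0 < t) (hδ : 0 < δ)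
    (ha : ∀ n, 0 ≤ a n) (hk : ∀ n, 0 ≤ k n) (hk1 : ∀ n, 1 ≤ n → δ ≤ k n) (hc : ∀ n, 0 < c n)
    (hac : ∀ n, c n ^ 2 * (1 + t * a n / (1 + t * k n)) = 1) :
    Tendsto c atTop (𝓝 1) ↔ Tendsto (fun n => a n / k n) atTop (𝓝 0) := by
  have hden : ∀ n, 0 < 1 + t * k n := fun n => by have := hk n; positivity
  have hnn : ∀ n, 0 ≤ t * a n / (1 + t * k n) := fun n =>
    div_nonneg (mul_nonneg ht.le (ha n)) (hden n).le
  constructor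
  · intro h
    have h1 : Tendsto (fun n => (1 / (t * δ) + 1) * ((c n ^ 2)⁻¹ - 1)) atTop (𝓝 0) := by
      have := (((h.pow 2).inv₀ (by norm_num)).sub_const 1).const_mul (1 / (t * δ) + 1)
      simpa using this
    refine squeeze_zero' (Eventually.of_forall fun n => div_nonneg (ha n) (hk n)) ?_ h1
    filter_upwards [eventually_ge_atTop 1] with n hn
    have hkn := hk1 n hn
    have hk0 := hδ.trans_le hkn
    have e : (c n ^ 2)⁻¹ - 1 = t * a n / (1 + t * k n) := by
      rw [inv_eq_of_mul_eq_one_right (hac n)]; ring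
    rw [e]
    have e2 : a n / k n = (1 / (t * k n) + 1) * (t * a n / (1 + t * k n)) := by
      have := hden n
      field_simp
    rw [e2]
    have := hnn n
    gcongr
  · intro h
    have h1 : Tendsto (fun n => t * a n / (1 + t * k n)) atTop (𝓝 0) := by
      refine squeeze_zero' (Eventually.of_forall hnn) ?_ h
      filter_upwards [eventually_ge_atTop 1] with n hn
      have hk0 := hδ.trans_le (hk1 n hn)
      have := ha n
      rw [div_le_div_iff₀ (hden n) hk0]
      nlinarith
    have h2 : Tendsto (fun n => Real.sqrt ((1 + t * a n / (1 + t * k n))⁻¹)) atTop (𝓝 1) := by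
      have := ((h1.const_add 1).inv₀ (by norm_num)).sqrt
      simpa using this
    refine h2.congr fun n => ?_
    rw [← eq_inv_of_mul_eq_one_left (hac n), Real.sqrt_sq (hc n).le]

theorem uvarov_stability_iff
    (μ : Measure ℂ) [IsFiniteMeasure μ]
    (hc : IsCompact (measSupport μ)) (hi : (measSupport μ).Infinite)
    (x : ℂ) (t : ℝ) (ht : 0 < t)
    (p : ℕ → Polynomial ℂ) (κ : ℕ → ℝ) (hON : OrthonormalPolys μ p κ)
    (q : ℕ → Polynomial ℂ) (κ' : ℕ → ℝ)
    (hON' : OrthonormalPolys (μ + ENNReal.ofReal t • Measure.dirac x) q κ') :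
    (Tendsto (fun n => κ' n / κ n) atTop (𝓝 1) ∧
      ∀ K : Set ℂ, IsCompact K → K ⊆ (convexHull ℝ (measSupport μ))ᶜ →
        TendstoUniformlyOn (fun n z => (q n).eval z / (p n).eval z)
          (fun _ => (1 : ℂ)) atTop K) ↔
    Tendsto
      (fun n => ‖(p n).eval x‖ ^ 2 / ∑ j ∈ Finset.range n, ‖(p j).eval x‖ ^ 2)
      atTop (𝓝 0) := by
  have h : IntegratesContinuous μ := fun f hf =>
    integrable_of_continuousOn_measSupport μ hc hf.continuousOn
  have hcpos : ∀ n, 0 < κ' n / κ n := fun n => div_pos (hON'.2.1 n) (hON.2.1 n)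
  have hratio := uvarov_ratio ht h hON hON'
  have hiff := ratio_tendsto_iff (a := fun n => ‖(p n).eval x‖ ^ 2) (k := cdDiag p x)
    (c := fun n => κ' n / κ n) ht (pow_pos (hON.2.1 0) 2) (fun _ => sq_nonneg _)
    (cdDiag_nonneg x) (fun n hn => hON.cdDiag_ge x hn) hcpos hratio
  change _ ↔ Tendsto (fun n => ‖(p n).eval x‖ ^ 2 / cdDiag p x n) atTop (𝓝 0)
  refine ⟨fun hl => hiff.1 hl.1, fun hr => ⟨hiff.2 hr, fun K hK hKH => ?_⟩⟩
  have hlim := hiff.2 hr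
  obtain ⟨B, hB, hbound⟩ := exists_uniform_ratio_bound hc hi.nonempty h hON hK hKH
  have hmaj : Tendsto (fun n => |κ' n / κ n - 1| +
      B * ((κ' n / κ n) * Real.sqrt (‖(p n).eval x‖ ^ 2 / cdDiag p x n))) atTop (𝓝 0) := by
    have h1 := (hlim.sub_const 1).abs
    have h2 := (hlim.mul hr.sqrt).const_mul B
    simpa using h1.add h2
  rw [Metric.tendstoUniformlyOn_iff]
  intro ε hε
  filter_upwards [hmaj.eventually_lt_const hε, eventually_ge_atTop 1] with n hn hn1 z hz
  refine lt_of_le_of_lt ?_ hn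
  have hk0 : 0 < cdDiag p x n := (pow_pos (hON.2.1 0) 2).trans_le (hON.cdDiag_ge x hn1)
  have hM : 0 < Real.sqrt (cdDiag p x n) := Real.sqrt_pos.2 hk0
  obtain ⟨hpz, hKz⟩ := hbound n (cdPoly p x n) (hON.degree_cdPoly_lt x n).le _ hM
    (by rw [hON.integral_cdPoly_sq h, Real.sq_sqrt hk0.le]) z hz
  have hform := congrArg (eval z) (uvarov_formula ht h hON hON' n)
  have hE := congrArg norm (uvarov_eval ht h hON hON' n)
  have hD : 0 < 1 + t * cdDiag p x n := by positivity
  rw [norm_mul, norm_mul, Complex.norm_real, Complex.norm_real, Real.norm_of_nonneg hD.le,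
    Real.norm_of_nonneg (hcpos n).le] at hE
  rw [eval_add, eval_mul, eval_mul, eval_C, eval_C] at hform
  set c : ℝ := κ' n / κ n
  have hq : (q n).eval z / (p n).eval z - 1 =
      ((c - 1 : ℝ) : ℂ) - t * (q n).eval x * ((cdPoly p x n).eval z / (p n).eval z) := by
    rw [hform]
    push_cast
    field_simp
    ring
  rw [dist_comm, dist_eq_norm, hq]
  refine (norm_sub_le _ _).trans ?_
  rw [Complex.norm_real, Real.norm_eq_abs, norm_mul, norm_mul, norm_div, Complex.norm_real,
    Real.norm_of_nonneg ht.le]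
  refine add_le_add_right ?_ _
  have hKz' : ‖(cdPoly p x n).eval z‖ / ‖(p n).eval z‖ ≤ B * Real.sqrt (cdDiag p x n) := by
    rwa [div_le_iff₀ (norm_pos_iff.2 hpz)]
  have hq2 : t * ‖(q n).eval x‖ ≤ c * ‖(p n).eval x‖ / cdDiag p x n := by
    rw [le_div_iff₀ hk0, ← hE]
    nlinarith [norm_nonneg ((q n).eval x)]
  rw [Real.sqrt_div (sq_nonneg _), Real.sqrt_sq (norm_nonneg _)]
  calc t * ‖(q n).eval x‖ * (‖(cdPoly p x n).eval z‖ / ‖(p n).eval z‖)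
      ≤ c * ‖(p n).eval x‖ / cdDiag p x n * (B * Real.sqrt (cdDiag p x n)) := by
        have := (hcpos n).le
        gcongr
    _ = B * (c * (‖(p n).eval x‖ / Real.sqrt (cdDiag p x n))) := by
        nth_rewrite 1 [← Real.mul_self_sqrt hk0.le]
        field_simp
end
end
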